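/- There exist constants C < ∞ and δ > 0, depending only on d, such that for any Lebesgue measurable sets E, E* ⊆ ℝ^d of positive finite measure, 𝒯(E, E*) ≤ C |E|^{d/(d+1)} |E*|^{d/(d+1)} · sup_ℬ ( (|E ∩ π(ℬ)|/|E|) · (|E* ∩ π*(ℬ)|/|E*|) )^δ, where the supremum is taken over all balls ℬ = ℬ(z̄, e, r, r*) satisfying |π(ℬ)| ≤ |E| and |π*(ℬ)| ≤ |E*|. -/

import Mathlib

open MeasureTheory ENNReal
open scoped RealInnerProductSpace

noncomputable section

/-- `ℝ^{d-1}` -/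
abbrev Vec (n : ℕ) : Type := EuclideanSpace ℝ (Fin n)

/-- `ℝ^d = ℝ^{d-1} × ℝ`, a point `x = (x', x_d)` -/
abbrev Pt (n : ℕ) : Type := Vec n × ℝ

/-- The Radon-like transform `Tf(x) = ∫_{ℝ^{d-1}} f(x' - t, x_d - |t|²) dt`. -/
def radonT (n : ℕ) (f : Pt n → ℝ≥0∞) (x : Pt n) : ℝ≥0∞ :=
  ∫⁻ t : Vec n, f (x.1 - t, x.2 - ‖t‖ ^ 2)

/-- The incidence functional `𝒯(E, E*) = ∫_E T(χ_{E*})`. -/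
def incT (n : ℕ) (E Estar : Set (Pt n)) : ℝ≥0∞ :=
  ∫⁻ x in E, radonT n (Estar.indicator 1) x

/-- Admissibility of the parameters of a ball `ℬ(z̄, e, r, r*)`:
the center `z̄ = (x̄, x̄*)` lies on the incidence manifold `ℐ`, `ρ > 0`,
`e` is an orthonormal basis of `ℝ^{d-1}`, and `r_j r*_j = ρ > 0` for all `j`. -/
def IsBallParams (n : ℕ) (zb : Pt n × Pt n) (e : Fin n → Vec n)
    (r rs : Fin n → ℝ) (ρ : ℝ) : Prop :=
  zb.2.2 = zb.1.2 - ‖zb.2.1 - zb.1.1‖ ^ 2 ∧ 0 < ρ ∧ Orthonormal ℝ e ∧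
    (∀ j, 0 < r j) ∧ (∀ j, 0 < rs j) ∧ (∀ j, r j * rs j = ρ)

/-- The ball `ℬ(z̄, e, r, r*)`, a subset of the incidence manifold
`ℐ = {(x,y) : y_d = x_d - |y' - x'|²} ⊆ ℝ^d × ℝ^d`. -/
def ballI (n : ℕ) (zb : Pt n × Pt n) (e : Fin n → Vec n)
    (r rs : Fin n → ℝ) (ρ : ℝ) : Set (Pt n × Pt n) :=
  fun z => z.2.2 = z.1.2 - ‖z.2.1 - z.1.1‖ ^ 2 ∧
    (∀ j, |⟪z.1.1 - zb.1.1, e j⟫| < r j) ∧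
    |z.1.2 - zb.2.2 - ‖z.1.1 - zb.2.1‖ ^ 2| < ρ ∧
    (∀ j, |⟪z.2.1 - zb.2.1, e j⟫| < rs j) ∧
    |z.2.2 - zb.1.2 + ‖z.2.1 - zb.1.1‖ ^ 2| < ρ

/-!
Write `Λ` for the number of incidences between `E` and `F`, put `|E| |F| = ρ ^ (n + 2)` and
`Λ = ε ρ ^ (n + 1)`, and let `α = Λ / |E|`, `β = Λ / |F|` be the average fibre volumes, so that
`α β = ε² ρ ^ n`.  Refining `E` and `F` to the points with rich fibres and selecting fibre points
greedily in orthogonal directions produces a *rich fan*: an incident pair together with an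
orthonormal frame and a box, elongated arbitrarily in that frame, which the fibres cannot avoid;
the determinant of the selected displacements bounds the volume of the box by a power of `1 / ε`
times the fibre volume.  Comparing the two-step paths `y → x → w` issuing from the fan with the
slabs that confine them shows that a fixed power of `ε` of the incidences lives in paraboloid
boxes adapted to the frame, with dual sides `r_j r*_j = ρ`.  Pigeonholing over a grid of small cells
then places them in the two projections of a single ball no larger than `E` and `F`, where both sets
therefore have density at least `ε ^ M` up to a constant.  This is the claim with `δ = 1 / (2 M)`.
-/

section General

variable {Ω : Type*} [MeasurableSpace Ω] {μ : Measure Ω} {f : Ω → ℝ≥0∞} {A : Set Ω}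

lemma ofReal_half_le_setLIntegral_inter_le (hf : Measurable f) {a t : ℝ} (ha : 0 ≤ a) (ht : 0 ≤ t)
    (hAa : μ A ≤ ENNReal.ofReal a) (h : ENNReal.ofReal (a * t) ≤ ∫⁻ x in A, f x ∂μ) :
    ENNReal.ofReal (a * t / 2) ≤ ∫⁻ x in A ∩ {x | ENNReal.ofReal (t / 2) ≤ f x}, f x ∂μ := by
  set S := {x | ENNReal.ofReal (t / 2) ≤ f x}
  have hS : MeasurableSet S := measurableSet_le measurable_const hf
  have hpoor : ∫⁻ x in A \ S, f x ∂μ ≤ ENNReal.ofReal (a * t / 2) := by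
    calc ∫⁻ x in A \ S, f x ∂μ
        ≤ ∫⁻ _ in A \ S, ENNReal.ofReal (t / 2) ∂μ :=
          setLIntegral_mono measurable_const fun x hx => (not_le.1 hx.2).le
      _ = ENNReal.ofReal (t / 2) * μ (A \ S) := setLIntegral_const _ _
      _ ≤ ENNReal.ofReal (t / 2) * ENNReal.ofReal a := by
          gcongr; exact (measure_mono Set.sdiff_subset).trans hAa
      _ = ENNReal.ofReal (a * t / 2) := by
          rw [← ENNReal.ofReal_mul (by positivity)]; congr 1; ring
  have hsplit : ENNReal.ofReal (a * t / 2) + ENNReal.ofReal (a * t / 2) ≤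
      (∫⁻ x in A ∩ S, f x ∂μ) + ENNReal.ofReal (a * t / 2) := by
    rw [← ENNReal.ofReal_add (by positivity) (by positivity), add_halves]
    refine h.trans ?_
    rw [← lintegral_inter_add_sdiff f A hS]
    gcongr
  exact (ENNReal.add_le_add_iff_right ENNReal.ofReal_ne_top).1 hsplit

lemma exists_mem_lt_of_setLIntegral_lt (hA : MeasurableSet A) {t : ℝ≥0∞}
    (h : ∫⁻ x in A, f x ∂μ < t * μ A) : ∃ x ∈ A, f x < t := by
  by_contra! hlarge
  refine h.not_ge ?_
  rw [← setLIntegral_const]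
  exact setLIntegral_mono' hA hlarge

lemma exists_ofReal_div_card_le_setLIntegral {ι : Type*} [Fintype ι] {S : ι → Set Ω}
    (hAS : A ⊆ ⋃ i, S i) {l : ℝ} (hl : 0 < l) (h : ENNReal.ofReal l ≤ ∫⁻ x in A, f x ∂μ) :
    ∃ i, ENNReal.ofReal (l / Fintype.card ι) ≤ ∫⁻ x in A ∩ S i, f x ∂μ := by
  by_contra! hsmall
  have hsub : ∫⁻ x in A, f x ∂μ ≤ ∑ i, ∫⁻ x in A ∩ S i, f x ∂μ := by
    have hunion := lintegral_iUnion_le (μ := μ) (fun i => A ∩ S i) f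
    rwa [← Set.inter_iUnion, Set.inter_eq_left.2 hAS, tsum_fintype] at hunion
  have hne : Nonempty ι := by
    by_contra hempty
    rw [not_nonempty_iff] at hempty
    rw [Finset.univ_eq_empty, Finset.sum_empty] at hsub
    exact (ENNReal.ofReal_pos.2 hl).not_ge (h.trans hsub)
  have hcard : (0 : ℝ) < Fintype.card ι := by exact_mod_cast Fintype.card_pos
  have hsum : ∑ _i : ι, ENNReal.ofReal (l / Fintype.card ι) = ENNReal.ofReal l := by
    rw [Finset.sum_const, Finset.card_univ, ← ENNReal.ofReal_nsmul, nsmul_eq_mul,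
      mul_div_cancel₀ _ hcard.ne']
  have hlt := ENNReal.sum_lt_sum_of_nonempty Finset.univ_nonempty fun i _ => hsmall i
  rw [hsum] at hlt
  exact (h.trans hsub).not_gt hlt

lemma exists_floor_cell_le_setLIntegral {κ : Type*} [Fintype κ] {g : κ → Ω → ℝ} {N : ℕ}
    (hg : ∀ x ∈ A, ∀ i, |g i x| ≤ N) {l : ℝ} (hl : 0 < l)
    (h : ENNReal.ofReal l ≤ ∫⁻ x in A, f x ∂μ) :
    ∃ u : κ → ℤ, ENNReal.ofReal (l / (2 * N + 1) ^ Fintype.card κ) ≤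
      ∫⁻ x in A ∩ {x | ∀ i, ⌊g i x⌋ = u i}, f x ∂μ := by
  classical
  have hcover : A ⊆ ⋃ u : κ → Finset.Icc (-(N : ℤ)) N, {x | ∀ i, ⌊g i x⌋ = u i} := by
    intro x hx
    refine Set.mem_iUnion.2 ⟨fun i => ⟨⌊g i x⌋, ?_⟩, fun i => rfl⟩
    have hbound := abs_le.1 (hg x hx i)
    rw [Finset.mem_Icc]
    refine ⟨Int.le_floor.2 (by push_cast; exact hbound.1), ?_⟩
    exact_mod_cast (Int.floor_le (g i x)).trans hbound.2
  have hcard : Fintype.card (κ → Finset.Icc (-(N : ℤ)) N) = (2 * N + 1) ^ Fintype.card κ := by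
    rw [Fintype.card_fun, Fintype.card_coe, Int.card_Icc]
    congr 1
    omega
  obtain ⟨u, hu⟩ := exists_ofReal_div_card_le_setLIntegral hcover hl h
  rw [hcard] at hu
  exact ⟨fun i => u i, by exact_mod_cast hu⟩

end General

section Incidence

variable {V : Type*} [NormedAddCommGroup V]

/-- The point over `w` of the paraboloid with vertex `z` and opening `s`. For `s = -1` it runs over
the points incident to `z` on the `E*` side, for `s = 1` over those on the `E` side. -/
def paraboloidLift (s : ℝ) (z : V × ℝ) (w : V) : V × ℝ :=
  (w, z.2 + s * ‖w - z.1‖ ^ 2)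

/-- The part of the paraboloid with vertex `z` and opening `s` lying in `G`, projected to `V`. -/
def paraboloidSection (s : ℝ) (G : Set (V × ℝ)) (z : V × ℝ) : Set V :=
  paraboloidLift s z ⁻¹' G

/-- The signed vertical distance of `x` from the paraboloid with vertex `z` and opening `s`. -/
def paraboloidDefect (s : ℝ) (z x : V × ℝ) : ℝ :=
  x.2 - z.2 - s * ‖x.1 - z.1‖ ^ 2

lemma paraboloidDefect_lift (s : ℝ) (z : V × ℝ) (w : V) :
    paraboloidDefect s z (paraboloidLift s z w) = 0 := by
  simp [paraboloidDefect, paraboloidLift]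

lemma paraboloidDefect_neg_swap (s : ℝ) (z x : V × ℝ) :
    paraboloidDefect (-s) x z = -paraboloidDefect s z x := by
  simp only [paraboloidDefect, norm_sub_rev z.1 x.1]
  ring

lemma paraboloidDefect_lift_neg (s : ℝ) (z : V × ℝ) (w : V) :
    paraboloidDefect s (paraboloidLift (-s) z w) z = 0 := by
  have := paraboloidDefect_neg_swap (-s) z (paraboloidLift (-s) z w)
  rwa [paraboloidDefect_lift, neg_neg, neg_zero] at this

lemma paraboloidLift_eq_of_defect_eq_zero {s : ℝ} {z x : V × ℝ}
    (h : paraboloidDefect s z x = 0) : paraboloidLift s z x.1 = x := by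
  refine Prod.ext rfl ?_
  simp only [paraboloidDefect, paraboloidLift] at h ⊢
  linarith

lemma paraboloidLift_neg_lift (s : ℝ) (z : V × ℝ) (w : V) :
    paraboloidLift (-s) (paraboloidLift s z w) z.1 = z :=
  paraboloidLift_eq_of_defect_eq_zero <| by
    rw [paraboloidDefect_neg_swap, paraboloidDefect_lift, neg_zero]

variable [MeasurableSpace V] [BorelSpace V]

lemma measurable_paraboloidDefect (s : ℝ) (z : V × ℝ) : Measurable (paraboloidDefect s z) := by
  unfold paraboloidDefect
  fun_prop

variable [SecondCountableTopology V]

lemma measurable_paraboloidLift_uncurry (s : ℝ) :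
    Measurable fun p : (V × ℝ) × V => paraboloidLift s p.1 p.2 := by
  unfold paraboloidLift
  fun_prop

lemma measurable_paraboloidLift (s : ℝ) (z : V × ℝ) : Measurable (paraboloidLift s z) :=
  (measurable_paraboloidLift_uncurry s).comp measurable_prodMk_left

lemma measurableSet_paraboloidSection (s : ℝ) {G : Set (V × ℝ)} (hG : MeasurableSet G)
    (z : V × ℝ) : MeasurableSet (paraboloidSection s G z) :=
  measurable_paraboloidLift s z hG

end Incidence

section IncidenceVolume

variable {V : Type*} [NormedAddCommGroup V] [InnerProductSpace ℝ V] [FiniteDimensional ℝ V]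
  [MeasurableSpace V] [BorelSpace V]

lemma measurable_volume_paraboloidSection (s : ℝ) {G : Set (V × ℝ)} (hG : MeasurableSet G) :
    Measurable fun z => volume (paraboloidSection s G z) :=
  measurable_measure_prodMk_left (measurable_paraboloidLift_uncurry s hG)

/-- The measure of the pairs in `A × B` whose second point lies on the paraboloid with opening `s`
and vertex the first. The incidence functional is the case `s = -1`. -/
def incidence (s : ℝ) (A B : Set (V × ℝ)) : ℝ≥0∞ :=
  ∫⁻ x in A, volume (paraboloidSection s B x)

lemma incT_eq_incidence {n : ℕ} (E : Set (Pt n)) {F : Set (Pt n)} (hF : MeasurableSet F) :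
    incT n E F = incidence (-1) E F := by
  refine lintegral_congr fun x => ?_
  rw [← lintegral_indicator_one (measurableSet_paraboloidSection (-1) hF x), radonT,
    ← lintegral_sub_left_eq_self (μ := volume) _ x.1]
  refine lintegral_congr fun t => ?_
  have hlift : (x.1 - (x.1 - t), x.2 - ‖x.1 - t‖ ^ 2) = paraboloidLift (-1) x t :=
    Prod.ext (sub_sub_cancel _ _) (by simp only [paraboloidLift, norm_sub_rev x.1 t]; ring)
  rw [hlift]
  rfl

lemma incidence_eq_volume (s : ℝ) {A B : Set (V × ℝ)} (hA : MeasurableSet A)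
    (hB : MeasurableSet B) :
    incidence s A B = volume {p : (V × ℝ) × V | p.1 ∈ A ∧ paraboloidLift s p.1 p.2 ∈ B} := by
  have hmeas : MeasurableSet {p : (V × ℝ) × V | p.1 ∈ A ∧ paraboloidLift s p.1 p.2 ∈ B} :=
    (measurable_fst hA).inter (measurable_paraboloidLift_uncurry s hB)
  rw [Measure.volume_eq_prod, Measure.prod_apply hmeas, incidence, ← lintegral_indicator hA]
  refine lintegral_congr fun x => ?_
  by_cases hx : x ∈ A <;> simp [hx, paraboloidSection, Set.preimage]

/-- The change of variables exchanging the two endpoints of an incident pair. -/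
def incidenceSwap (s : ℝ) (p : (V × ℝ) × V) : (V × ℝ) × V :=
  (paraboloidLift s p.1 p.2, p.1.1)

lemma measurePreserving_incidenceSwap (s : ℝ) :
    MeasurePreserving (incidenceSwap (V := V) s) := by
  let regroup : (V × ℝ) × V ≃ᵐ (V × V) × ℝ :=
    MeasurableEquiv.prodComm.trans MeasurableEquiv.prodAssoc.symm
  have hregroup : MeasurePreserving regroup :=
    Measure.measurePreserving_swap.trans (volume_preserving_prodAssoc.symm)
  have hshear : MeasurePreserving
      fun q : (V × V) × ℝ => (q.1.swap, q.2 + s * ‖q.1.1 - q.1.2‖ ^ 2) :=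
    Measure.measurePreserving_swap.skew_product (g := fun v t => t + s * ‖v.1 - v.2‖ ^ 2)
      (by fun_prop) (.of_forall fun v => map_add_right_eq_self _ _)
  exact (hregroup.symm.comp hshear).comp hregroup

lemma incidence_comm (s : ℝ) {A B : Set (V × ℝ)} (hA : MeasurableSet A) (hB : MeasurableSet B) :
    incidence s A B = incidence (-s) B A := by
  have hmeas : MeasurableSet {p : (V × ℝ) × V | p.1 ∈ B ∧ paraboloidLift (-s) p.1 p.2 ∈ A} :=
    (measurable_fst hB).inter (measurable_paraboloidLift_uncurry (-s) hA)
  rw [incidence_eq_volume s hA hB, incidence_eq_volume (-s) hB hA,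
    ← (measurePreserving_incidenceSwap s).measure_preimage hmeas.nullMeasurableSet]
  congr 1
  ext p
  simp [incidenceSwap, paraboloidLift_neg_lift, and_comm]

/-- The points of `E` whose paraboloid with opening `s` meets `F` in measure at least `t`. -/
def richPart (s t : ℝ) (E F : Set (V × ℝ)) : Set (V × ℝ) :=
  E ∩ {x | ENNReal.ofReal t ≤ volume (paraboloidSection s F x)}

lemma richPart_subset (s t : ℝ) (E F : Set (V × ℝ)) : richPart s t E F ⊆ E :=
  Set.inter_subset_left

lemma measurableSet_richPart (s t : ℝ) {E F : Set (V × ℝ)} (hE : MeasurableSet E)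
    (hF : MeasurableSet F) : MeasurableSet (richPart s t E F) :=
  hE.inter (measurableSet_le measurable_const (measurable_volume_paraboloidSection s hF))

lemma ofReal_half_le_incidence_richPart {s a t : ℝ} {E F : Set (V × ℝ)} (hE : MeasurableSet E)
    (hF : MeasurableSet F) (ha : 0 ≤ a) (ht : 0 ≤ t) (hEa : volume E ≤ ENNReal.ofReal a)
    (h : ENNReal.ofReal (a * t) ≤ incidence s E F) :
    ENNReal.ofReal (a * t / 2) ≤ incidence (-s) F (richPart s (t / 2) E F) := by
  rw [← incidence_comm s (measurableSet_richPart s _ hE hF) hF]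
  exact ofReal_half_le_setLIntegral_inter_le (measurable_volume_paraboloidSection s hF) ha ht hEa h

end IncidenceVolume

section Boxes

variable {V : Type*} [NormedAddCommGroup V] [InnerProductSpace ℝ V]

/-- The open box with centre `c` and half side lengths `r` in the orthonormal coordinates `e`. -/
def orthoBox {ι : Type*} [Fintype ι] (e : OrthonormalBasis ι ℝ V) (c : V) (r : ι → ℝ) : Set V :=
  {y | ∀ j, |⟪y - c, e j⟫| < r j}

/-- The coordinates of a vector in an orthonormal basis, as a plain function so that they carry
the product measure. -/
def orthoCoord {ι : Type*} [Fintype ι] (e : OrthonormalBasis ι ℝ V) (y : V) : ι → ℝ :=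
  fun j => ⟪y, e j⟫

/-- The set of points over an orthonormal box lying within height `t` of the paraboloid with vertex
`z` and opening `s`. The projections of the balls `ℬ` have this shape. -/
def paraboloidBox {ι : Type*} [Fintype ι] (s : ℝ) (e : OrthonormalBasis ι ℝ V) (c : V)
    (z : V × ℝ) (r : ι → ℝ) (t : ℝ) : Set (V × ℝ) :=
  {x | x.1 ∈ orthoBox e c r ∧ |paraboloidDefect s z x| < t}

section
variable {ι : Type*} [Fintype ι] (e : OrthonormalBasis ι ℝ V) (c : V) (r : ι → ℝ)

lemma inner_eq_sum_orthoCoord (y w : V) :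
    ⟪y, w⟫ = ∑ i, orthoCoord e w i * orthoCoord e y i := by
  simp only [← e.sum_inner_mul_inner y w, orthoCoord, real_inner_comm, mul_comm]

lemma orthoBox_eq_preimage : orthoBox e c r = orthoCoord e ⁻¹'
    (Set.univ.pi fun j => Set.Ioo (orthoCoord e c j - r j) (orthoCoord e c j + r j)) := by
  ext y
  simp only [orthoBox, Set.mem_ofPred_eq, Set.mem_preimage, Set.mem_univ_pi, Set.mem_Ioo,
    orthoCoord, inner_sub_left, abs_lt, neg_lt_sub_iff_lt_add, sub_lt_iff_lt_add', add_comm]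

variable [MeasurableSpace V] [BorelSpace V]

lemma measurableSet_orthoBox : MeasurableSet (orthoBox e c r) := by
  simp only [orthoBox, Set.ofPred_forall]
  exact .iInter fun j => measurableSet_lt (by fun_prop) measurable_const

lemma measurableSet_paraboloidBox (s : ℝ) (z : V × ℝ) (t : ℝ) :
    MeasurableSet (paraboloidBox s e c z r t) :=
  (measurable_fst (measurableSet_orthoBox e c r)).inter
    (measurableSet_lt (measurable_paraboloidDefect s z).abs measurable_const)

lemma half_le_measure_orthoBox {ν : Measure V} [IsFiniteMeasure ν]
    (hr : ∀ i, ν {z | r i ≤ |⟪z - c, e i⟫|} ≤ ν Set.univ / (2 * Fintype.card ι)) :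
    ν Set.univ / 2 ≤ ν (orthoBox e c r) := by
  have hcompl : ν (orthoBox e c r)ᶜ ≤ ν Set.univ / 2 := by
    have hcover : (orthoBox e c r)ᶜ ⊆ ⋃ i, {z | r i ≤ |⟪z - c, e i⟫|} := by
      intro z hz
      simpa [orthoBox] using hz
    calc ν (orthoBox e c r)ᶜ
        ≤ ∑ i, ν {z | r i ≤ |⟪z - c, e i⟫|} :=
          (measure_mono hcover).trans (measure_iUnion_fintype_le _ _)
      _ ≤ ∑ _i : ι, ν Set.univ / (2 * Fintype.card ι) := Finset.sum_le_sum fun i _ => hr i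
      _ = Fintype.card ι * (ν Set.univ / 2 / Fintype.card ι) := by
          rw [Finset.sum_const, Finset.card_univ, nsmul_eq_mul, div_eq_mul_inv,
            ENNReal.mul_inv (.inl two_ne_zero) (.inl ENNReal.ofNat_ne_top), ← mul_assoc (ν _),
            ← div_eq_mul_inv, ← div_eq_mul_inv]
      _ ≤ ν Set.univ / 2 := ENNReal.mul_div_le
  have hsplit := measure_add_measure_compl (μ := ν) (measurableSet_orthoBox e c r)
  refine (ENNReal.add_le_add_iff_right (measure_ne_top ν (orthoBox e c r)ᶜ)).1 ?_
  rw [hsplit]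
  conv_rhs => rw [← ENNReal.add_halves (ν Set.univ)]
  gcongr

variable [FiniteDimensional ℝ V]

lemma measurePreserving_orthoCoord : MeasurePreserving (orthoCoord e) := by
  have hcoord : orthoCoord e = WithLp.ofLp ∘ e.repr := by
    funext y j
    simp [orthoCoord, e.repr_apply_apply, real_inner_comm]
  rw [hcoord]
  exact (PiLp.volume_preserving_ofLp ι).comp e.measurePreserving_repr

lemma volume_orthoBox {r : ι → ℝ} (hr : ∀ j, 0 < r j) :
    volume (orthoBox e c r) = ENNReal.ofReal (2 ^ Fintype.card ι * ∏ j, r j) := by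
  rw [orthoBox_eq_preimage, (measurePreserving_orthoCoord e).measure_preimage
    (MeasurableSet.univ_pi fun j => measurableSet_Ioo).nullMeasurableSet, volume_pi_pi,
    ← Finset.card_univ, ← Finset.prod_const, ← Finset.prod_mul_distrib,
    ENNReal.ofReal_prod_of_nonneg fun j _ => by linarith [hr j]]
  refine Finset.prod_congr rfl fun j _ => ?_
  rw [Real.volume_Ioo]
  congr 1
  ring

lemma volume_paraboloidBox (s : ℝ) (z : V × ℝ) {r : ι → ℝ} (hr : ∀ j, 0 < r j) {t : ℝ}
    (ht : 0 ≤ t) : volume (paraboloidBox s e c z r t) =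
      ENNReal.ofReal (2 ^ Fintype.card ι * (∏ j, r j) * (2 * t)) := by
  have hfiber : ∀ w, volume (Prod.mk w ⁻¹' paraboloidBox s e c z r t) =
      (orthoBox e c r).indicator (fun _ => ENNReal.ofReal (2 * t)) w := by
    intro w
    by_cases hw : w ∈ orthoBox e c r
    · have hball : Prod.mk w ⁻¹' paraboloidBox s e c z r t =
          Metric.ball (z.2 + s * ‖w - z.1‖ ^ 2) t := by
        ext τ
        simp only [paraboloidBox, paraboloidDefect, Set.mem_preimage, Set.mem_ofPred_eq, hw,
          true_and, Metric.mem_ball, Real.dist_eq, sub_sub]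
      rw [hball, Real.volume_ball, Set.indicator_of_mem hw]
    · have hempty : Prod.mk w ⁻¹' paraboloidBox s e c z r t = ∅ :=
        Set.eq_empty_of_forall_notMem fun τ hτ => hw hτ.1
      rw [hempty, measure_empty, Set.indicator_of_notMem hw]
  rw [Measure.volume_eq_prod, Measure.prod_apply (measurableSet_paraboloidBox e c r s z t),
    lintegral_congr hfiber, lintegral_indicator (measurableSet_orthoBox e c r), setLIntegral_const,
    volume_orthoBox e c hr, mul_comm, ← ENNReal.ofReal_mul' (by positivity)]

end

section Slab

lemma paraboloidLift_neg_lift_eq (s : ℝ) (z : V × ℝ) (y x : V) :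
    paraboloidLift (-s) (paraboloidLift s z y) x =
      (x, z.2 + s * (‖z.1‖ ^ 2 - ‖x‖ ^ 2) + ⟪y, (2 * s) • (x - z.1)⟫) := by
  refine Prod.ext rfl ?_
  simp only [paraboloidLift]
  rw [norm_sub_sq_real, norm_sub_sq_real, inner_smul_right, inner_sub_right, real_inner_comm x y]
  ring

lemma lintegral_comp_add_mul_left {H : ℝ → ℝ≥0∞} (hH : Measurable H) (κ : ℝ) {a : ℝ}
    (ha : a ≠ 0) : ∫⁻ t : ℝ, H (κ + a * t) = ENNReal.ofReal |a⁻¹| * ∫⁻ t, H t := by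
  rw [← lintegral_map (f := fun t => H (κ + t)) (by fun_prop) (measurable_const_mul a),
    Real.map_volume_mul_left ha, lintegral_smul_measure,
    lintegral_add_left_eq_self (μ := volume) H κ, smul_eq_mul]

lemma setLIntegral_pi_comp_add_sum_le {m : ℕ} {I : Fin (m + 1) → Set ℝ}
    (hI : ∀ i, MeasurableSet (I i)) {a : Fin (m + 1) → ℝ} {j : Fin (m + 1)} (ha : a j ≠ 0) (κ : ℝ)
    {H : ℝ → ℝ≥0∞} (hH : Measurable H) :
    ∫⁻ z in Set.univ.pi I, H (κ + ∑ i, a i * z i) ≤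
      ENNReal.ofReal |(a j)⁻¹| * (∏ i, volume (I (j.succAbove i))) * ∫⁻ t, H t := by
  have hsplit := (volume_preserving_piFinSuccAbove (fun _ : Fin (m + 1) => ℝ) j).symm
  have hsum : ∀ p : ℝ × (Fin m → ℝ), κ + ∑ i, a i *
      (MeasurableEquiv.piFinSuccAbove (fun _ : Fin (m + 1) => ℝ) j).symm p i =
        κ + ∑ i, a (j.succAbove i) * p.2 i + a j * p.1 := by
    intro p
    simp only [MeasurableEquiv.piFinSuccAbove_symm_apply, Fin.sum_univ_succAbove _ j,
      Fin.insertNthEquiv_apply, Fin.insertNth_apply_same, Fin.insertNth_apply_succAbove]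
    ring
  have hsub : (MeasurableEquiv.piFinSuccAbove (fun _ : Fin (m + 1) => ℝ) j).symm ⁻¹'
      Set.univ.pi I ⊆ Set.univ ×ˢ Set.univ.pi fun i => I (j.succAbove i) := by
    refine fun p hp => ⟨trivial, fun i _ => ?_⟩
    simpa using hp (j.succAbove i) trivial
  rw [← hsplit.setLIntegral_comp_preimage (MeasurableSet.univ_pi hI) (by fun_prop)]
  simp only [hsum]
  refine (lintegral_mono_set hsub).trans_eq ?_
  rw [Measure.volume_eq_prod, setLIntegral_prod_symm _ (by fun_prop)]
  simp only [Measure.restrict_univ, lintegral_comp_add_mul_left hH _ ha, setLIntegral_const,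
    volume_pi_pi]
  ring

variable {n : ℕ} [MeasurableSpace V] [BorelSpace V] [FiniteDimensional ℝ V]
  (e : OrthonormalBasis (Fin n) ℝ V) (c : V) {r : Fin n → ℝ}

lemma setLIntegral_orthoBox_comp_add_inner_le (hr : ∀ j, 0 < r j) {j : Fin n} {v : V} {t : ℝ}
    (ht : 0 < t) (hv : t ≤ |⟪v, e j⟫|) (κ : ℝ) {H : ℝ → ℝ≥0∞} (hH : Measurable H) :
    ∫⁻ y in orthoBox e c r, H (κ + ⟪y, v⟫) ≤
      ENNReal.ofReal (2 ^ n * (∏ i, r i) / (2 * r j * t)) * ∫⁻ τ, H τ := by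
  obtain ⟨m, rfl⟩ : ∃ m, n = m + 1 := Nat.exists_eq_succ_of_ne_zero j.pos.ne'
  have hvj : orthoCoord e v j ≠ 0 := abs_pos.1 (ht.trans_le hv)
  simp only [inner_eq_sum_orthoCoord e _ v]
  rw [orthoBox_eq_preimage, (measurePreserving_orthoCoord e).setLIntegral_comp_preimage
    (f := fun z => H (κ + ∑ i, orthoCoord e v i * z i))
    (MeasurableSet.univ_pi fun j => measurableSet_Ioo) (by fun_prop)]
  refine (setLIntegral_pi_comp_add_sum_le (fun _ => measurableSet_Ioo) hvj κ hH).trans ?_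
  gcongr
  have hside : ∀ i, volume (Set.Ioo (orthoCoord e c i - r i) (orthoCoord e c i + r i)) =
      ENNReal.ofReal (2 * r i) := fun i => by
    rw [Real.volume_Ioo]; congr 1; ring
  have hnonneg : ∀ i, 0 ≤ 2 * r i := fun i => by linarith [hr i]
  simp only [hside]
  rw [← ENNReal.ofReal_prod_of_nonneg fun i _ => hnonneg _, ← ENNReal.ofReal_mul (abs_nonneg _)]
  refine ENNReal.ofReal_le_ofReal ?_
  have hrj := hr j
  calc |(orthoCoord e v j)⁻¹| * ∏ i, 2 * r (j.succAbove i)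
      ≤ t⁻¹ * ∏ i, 2 * r (j.succAbove i) := by
        rw [abs_inv]
        have := Finset.prod_nonneg fun i (_ : i ∈ Finset.univ) => hnonneg (j.succAbove i)
        gcongr
        exact hv
    _ = 2 ^ (m + 1) * (∏ i, r i) / (2 * r j * t) := by
        rw [Fin.prod_univ_succAbove r j, Finset.prod_mul_distrib, Finset.prod_const,
          Finset.card_univ, Fintype.card_fin]
        field_simp
        ring

-- Fubini: for fixed `x`, the height of the two-step point is an affine function of `y` with slope
-- `2 (x - z.1)`, so moving `y` along `e j` sweeps the vertical line over `x` at speed `≥ 2 t`.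
lemma setLIntegral_twoStep_slab_le (hr : ∀ j, 0 < r j) (j : Fin n) (z : V × ℝ)
    {t : ℝ} (ht : 0 < t) {s : ℝ} (hs : |s| = 1) {H : V × ℝ → ℝ≥0∞} (hH : Measurable H) :
    ∫⁻ y in orthoBox e c r, ∫⁻ x in {x | t ≤ |⟪x - z.1, e j⟫|},
        H (paraboloidLift (-s) (paraboloidLift s z y) x) ≤
      ENNReal.ofReal (2 ^ n * (∏ i, r i) / (4 * r j * t)) * ∫⁻ p, H p := by
  have hS : MeasurableSet {x | t ≤ |⟪x - z.1, e j⟫|} :=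
    measurableSet_le measurable_const (by fun_prop)
  simp only [paraboloidLift_neg_lift_eq]
  rw [lintegral_lintegral_swap (by fun_prop), Measure.volume_eq_prod,
    lintegral_prod _ hH.aemeasurable, ← lintegral_const_mul _ hH.lintegral_prod_right']
  refine (setLIntegral_mono' hS fun x hx => ?_).trans (setLIntegral_le_lintegral _ _)
  have hslope : 2 * t ≤ |⟪(2 * s) • (x - z.1), e j⟫| := by
    rw [real_inner_smul_left, abs_mul, abs_mul, hs, abs_two, mul_one]
    gcongr
    exact hx
  have hsweep := setLIntegral_orthoBox_comp_add_inner_le e c hr (by positivity) hslope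
    (z.2 + s * (‖z.1‖ ^ 2 - ‖x‖ ^ 2)) (H := fun τ => H (x, τ)) (by fun_prop)
  rwa [show 2 * r j * (2 * t) = 4 * r j * t by ring] at hsweep

lemma setLIntegral_volume_twoStep_inter_slab_le (hr : ∀ j, 0 < r j) (j : Fin n) (z : V × ℝ)
    {t : ℝ} (ht : 0 < t) {s : ℝ} (hs : |s| = 1) {G : Set (V × ℝ)} (hG : MeasurableSet G) :
    ∫⁻ y in orthoBox e c r, volume (paraboloidSection (-s) G (paraboloidLift s z y) ∩
        {x | t ≤ |⟪x - z.1, e j⟫|}) ≤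
      ENNReal.ofReal (2 ^ n * (∏ i, r i) / (4 * r j * t)) * volume G := by
  rw [← lintegral_indicator_one hG]
  refine (lintegral_mono fun y => ?_).trans
    (setLIntegral_twoStep_slab_le e c hr j z ht hs (measurable_one.indicator hG))
  have hmeas := measurableSet_paraboloidSection (-s) hG (paraboloidLift s z y)
  rw [← Measure.restrict_apply hmeas, ← lintegral_indicator_one hmeas]
  rfl

lemma setLIntegral_volume_twoStep_diff_orthoBox_le {X : Set V} {r' : Fin n → ℝ} {ρ : ℝ}
    (hr : ∀ j, 0 < r j) (hr' : ∀ j, 0 < r' j) (hρ : ∀ j, r j * r' j = ρ)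
    (hX : X ⊆ orthoBox e c r) (z : V × ℝ) {R : ℝ} (hR : 0 < R) {s : ℝ} (hs : |s| = 1)
    {G : Set (V × ℝ)} (hG : MeasurableSet G) :
    ∫⁻ y in X, volume (paraboloidSection (-s) G (paraboloidLift s z y) \
        orthoBox e z.1 (R • r')) ≤
      ENNReal.ofReal (n * (2 ^ n * (∏ i, r i)) / (4 * R * ρ)) * volume G := by
  let slab (j : Fin n) : Set V := {x | R * r' j ≤ |⟪x - z.1, e j⟫|}
  have hcover : ∀ y, volume (paraboloidSection (-s) G (paraboloidLift s z y) \
      orthoBox e z.1 (R • r')) ≤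
        ∑ j, volume (paraboloidSection (-s) G (paraboloidLift s z y) ∩ slab j) := by
    intro y
    refine (measure_mono fun x hx => ?_).trans (measure_iUnion_fintype_le _ _)
    obtain ⟨j, hj⟩ := not_forall.1 hx.2
    exact Set.mem_iUnion.2 ⟨j, hx.1, not_lt.1 hj⟩
  have hmeas : ∀ j, Measurable fun y =>
      volume (paraboloidSection (-s) G (paraboloidLift s z y) ∩ slab j) := by
    intro j
    have hslab : MeasurableSet (slab j) := measurableSet_le measurable_const (by fun_prop)
    exact (measurable_volume_paraboloidSection (-s) (hG.inter (measurable_fst hslab))).comp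
      (measurable_paraboloidLift s z)
  calc ∫⁻ y in X, volume (paraboloidSection (-s) G (paraboloidLift s z y) \
        orthoBox e z.1 (R • r'))
      ≤ ∫⁻ y in orthoBox e c r,
          ∑ j, volume (paraboloidSection (-s) G (paraboloidLift s z y) ∩ slab j) :=
        (lintegral_mono hcover).trans (lintegral_mono_set hX)
    _ = ∑ j, ∫⁻ y in orthoBox e c r,
          volume (paraboloidSection (-s) G (paraboloidLift s z y) ∩ slab j) :=
        lintegral_finsetSum _ fun j _ => hmeas j
    _ ≤ ∑ _j : Fin n, ENNReal.ofReal (2 ^ n * (∏ i, r i) / (4 * R * ρ)) * volume G := by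
        refine Finset.sum_le_sum fun j _ => ?_
        rw [← hρ j, show 4 * R * (r j * r' j) = 4 * r j * (R * r' j) by ring]
        exact setLIntegral_volume_twoStep_inter_slab_le e c hr j z (mul_pos hR (hr' j)) hs hG
    _ = ENNReal.ofReal (n * (2 ^ n * (∏ i, r i)) / (4 * R * ρ)) * volume G := by
        rw [Finset.sum_const, Finset.card_univ, Fintype.card_fin, ← smul_mul_assoc,
          ← ENNReal.ofReal_nsmul, nsmul_eq_mul, ← mul_div_assoc]

lemma ofReal_mul_volume_le_setLIntegral_twoStep_inter_orthoBox {X : Set V} {r' : Fin n → ℝ}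
    {ρ : ℝ} (hr : ∀ j, 0 < r j) (hr' : ∀ j, 0 < r' j) (hρ : ∀ j, r j * r' j = ρ)
    (hX : MeasurableSet X) (hXc : X ⊆ orthoBox e c r) (z : V × ℝ) {R : ℝ} (hR : 0 < R) {s : ℝ}
    (hs : |s| = 1) {G : Set (V × ℝ)} (hG : MeasurableSet G) {t : ℝ}
    (ht : ∀ y ∈ X, ENNReal.ofReal t ≤ volume (paraboloidSection (-s) G (paraboloidLift s z y))) :
    ENNReal.ofReal t * volume X ≤
      (∫⁻ y in X, volume (paraboloidSection (-s) G (paraboloidLift s z y) ∩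
        orthoBox e z.1 (R • r'))) +
      ENNReal.ofReal (n * (2 ^ n * (∏ i, r i)) / (4 * R * ρ)) * volume G := by
  have hbox : MeasurableSet (orthoBox e z.1 (R • r')) := measurableSet_orthoBox e _ _
  have hmeas : Measurable fun y => volume (paraboloidSection (-s) G (paraboloidLift s z y) ∩
      orthoBox e z.1 (R • r')) :=
    (measurable_volume_paraboloidSection (-s) (hG.inter (measurable_fst hbox))).comp
      (measurable_paraboloidLift s z)
  calc ENNReal.ofReal t * volume X
      ≤ ∫⁻ y in X, volume (paraboloidSection (-s) G (paraboloidLift s z y)) := by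
        rw [← setLIntegral_const]; exact setLIntegral_mono' hX ht
    _ = (∫⁻ y in X, volume (paraboloidSection (-s) G (paraboloidLift s z y) ∩
          orthoBox e z.1 (R • r'))) +
        ∫⁻ y in X, volume (paraboloidSection (-s) G (paraboloidLift s z y) \
          orthoBox e z.1 (R • r')) := by
        rw [← lintegral_add_left hmeas]
        exact lintegral_congr fun y => (measure_inter_add_sdiff _ hbox).symm
    _ ≤ _ := by
        gcongr
        exact setLIntegral_volume_twoStep_diff_orthoBox_le e c hr hr' hρ hXc z hR hs hG

end Slab

end Boxes

section Selection

variable {Ω : Type*} [MeasurableSpace Ω] {μ : Measure Ω} [IsFiniteMeasure μ] {η : ℝ≥0∞}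

lemma exists_mem_mul_le_lintegral (hη : η ≠ 0) {S : Set Ω} (hS : η ≤ μ S) {G : Ω → ℝ≥0∞}
    (hG : Measurable G) : ∃ z ∈ S, G z * η ≤ ∫⁻ x, G x ∂μ := by
  have hS0 : μ S ≠ 0 := fun h => hη (by simpa [h] using hS)
  obtain ⟨z, hzS, hz⟩ := exists_le_setLAverage hS0 (measure_ne_top _ _) hG.aemeasurable
  refine ⟨z, hzS, ?_⟩
  rw [setLAverage_eq] at hz
  calc G z * η ≤ (∫⁻ x in S, G x ∂μ) / μ S * μ S := by gcongr
    _ = ∫⁻ x in S, G x ∂μ := ENNReal.div_mul_cancel hS0 (measure_ne_top _ _)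
    _ ≤ ∫⁻ x, G x ∂μ := setLIntegral_le_lintegral _ _

lemma exists_mem_tuple_mul_pow_le_lintegral_pi (hη : η ≠ 0) {m : ℕ}
    {S : ∀ k, (Fin k → Ω) → Set Ω} (hS : ∀ k < m, ∀ y, η ≤ μ (S k y))
    {G : (Fin m → Ω) → ℝ≥0∞} (hG : Measurable G) :
    ∃ y : Fin m → Ω, (∀ i : Fin m, y i ∈ S i (Fin.take i i.isLt.le y)) ∧
      G y * η ^ m ≤ ∫⁻ y, G y ∂Measure.pi fun _ => μ := by
  induction m with
  | zero =>
    refine ⟨Fin.elim0, fun i => i.elim0, ?_⟩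
    simp [Subsingleton.elim _ (Fin.elim0 : Fin 0 → Ω)]
  | succ m ih =>
    have hlast := (measurePreserving_piFinSuccAbove (fun _ : Fin (m + 1) => μ) (Fin.last m)).symm
    have hsnoc : ∀ p, (MeasurableEquiv.piFinSuccAbove (fun _ : Fin (m + 1) => Ω)
        (Fin.last m)).symm p = Fin.snoc (α := fun _ => Ω) p.2 p.1 := fun p =>
      Fin.insertNth_last (α := fun _ => Ω) p.1 p.2
    have hGsnoc : Measurable fun p : Ω × (Fin m → Ω) => G (Fin.snoc (α := fun _ => Ω) p.2 p.1) := by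
      simp only [← hsnoc]
      exact hG.comp hlast.measurable
    have hfubini : ∫⁻ y, G y ∂Measure.pi (fun _ => μ) =
        ∫⁻ y, ∫⁻ z, G (Fin.snoc (α := fun _ => Ω) y z) ∂μ ∂Measure.pi fun _ => μ := by
      rw [← lintegral_prod_symm' _ hGsnoc, ← hlast.lintegral_comp hG]
      simp only [hsnoc]
    obtain ⟨y, hyS, hyG⟩ := ih (fun k hk => hS k (hk.trans m.lt_succ_self))
      (hGsnoc.lintegral_prod_left' (μ := μ))
    obtain ⟨z, hzS, hz⟩ := exists_mem_mul_le_lintegral hη (hS m m.lt_succ_self y)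
      (hGsnoc.comp measurable_prodMk_right)
    refine ⟨Fin.snoc (α := fun _ => Ω) y z, fun i => ?_, ?_⟩
    · induction i using Fin.lastCases with
      | last =>
        have htake : Fin.take m m.le_succ (Fin.snoc (α := fun _ => Ω) y z) = y := by
          rw [Fin.take_eq_init, Fin.init_snoc]
        simpa only [Fin.snoc_last, Fin.val_last, htake] using hzS
      | cast i =>
        have htake : Fin.take i (i.isLt.le.trans m.le_succ) (Fin.snoc (α := fun _ => Ω) y z) =
            Fin.take i i.isLt.le y := by
          rw [← Fin.take_init, Fin.init_snoc]
        simpa only [Fin.snoc_castSucc, Fin.val_castSucc, htake] using hyS i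
    · calc G (Fin.snoc (α := fun _ => Ω) y z) * η ^ (m + 1)
          = G (Fin.snoc (α := fun _ => Ω) y z) * η * η ^ m := by ring
        _ ≤ (∫⁻ x, G (Fin.snoc (α := fun _ => Ω) y x) ∂μ) * η ^ m := by gcongr; exact hz
        _ ≤ ∫⁻ y, G y ∂Measure.pi fun _ => μ := hyG.trans_eq hfubini.symm

lemma exists_dyadic_quantile {g : Ω → ℝ} (hg : Measurable g) (hη : η ≠ 0)
    (hpos : η < μ {x | 0 < g x}) :
    ∃ r : ℝ, 0 < r ∧ η ≤ μ {x | r ≤ g x} ∧ μ {x | 2 * r ≤ g x} ≤ η := by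
  let S (k : ℤ) : Set Ω := {x | (2 : ℝ) ^ k ≤ g x}
  have hS : Antitone S := fun k l hkl x hx =>
    (zpow_le_zpow_right₀ one_le_two hkl).trans (Set.mem_ofPred_eq ▸ hx)
  have hmeas : ∀ k, MeasurableSet (S k) := fun k => measurableSet_le measurable_const hg
  have hsmall : ∃ k, μ (S k) ≤ η := by
    have hinter : ⋂ k, S k = ∅ := by
      refine Set.eq_empty_of_forall_notMem fun x hx => ?_
      obtain ⟨k, hk⟩ := pow_unbounded_of_one_lt (g x) one_lt_two
      exact hk.not_ge (by simpa [S] using Set.mem_iInter.1 hx k)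
    have hlim := tendsto_measure_iInter_atTop (μ := μ)
      (fun k => (hmeas k).nullMeasurableSet) hS ⟨0, measure_ne_top _ _⟩
    rw [hinter, measure_empty] at hlim
    exact ((hlim.eventually (gt_mem_nhds hη.bot_lt)).exists).imp fun k hk => hk.le
  have hlarge : ∃ b, ∀ k, μ (S k) ≤ η → b ≤ k := by
    have hunion : {x | 0 < g x} ⊆ ⋃ k, S k := by
      intro x hx
      obtain ⟨k, hk⟩ := exists_pow_lt_of_lt_one hx (one_half_lt_one (α := ℝ))
      refine Set.mem_iUnion.2 ⟨-k, ?_⟩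
      simpa [S, zpow_neg] using hk.le
    have hlim := tendsto_measure_iUnion_atBot (μ := μ) hS
    obtain ⟨b, hb⟩ :=
      (hlim.eventually (lt_mem_nhds (hpos.trans_le (measure_mono hunion)))).exists
    refine ⟨b, fun k hk => ?_⟩
    by_contra! hkb
    exact (hb.trans_le (measure_mono (hS hkb.le))).not_ge hk
  obtain ⟨k, hk, hleast⟩ := Int.exists_least_of_bdd hlarge hsmall
  refine ⟨2 ^ (k - 1), by positivity, ?_, ?_⟩
  · by_contra! hlt
    exact (hleast (k - 1) hlt.le).not_gt (by omega)
  · have hdouble : (2 : ℝ) * 2 ^ (k - 1) = 2 ^ k := by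
      rw [← zpow_one_add₀ two_ne_zero, add_sub_cancel]
    rwa [hdouble]

end Selection

section GreedyBox

variable {V : Type*} [NormedAddCommGroup V] [InnerProductSpace ℝ V]

section GramSchmidt
open InnerProductSpace

lemma sub_gramSchmidt_mem_span {n : ℕ} (f : Fin n → V) (i : Fin n) :
    f i - gramSchmidt ℝ f i ∈ Submodule.span ℝ (f '' Set.Iio i) := by
  rw [gramSchmidt_def, _root_.sub_sub_cancel, ← span_gramSchmidt_Iio]
  refine Submodule.sum_mem _ fun k hk => ?_
  rw [Submodule.starProjection_singleton]
  exact Submodule.smul_mem _ _ (Submodule.subset_span ⟨k, Finset.mem_Iio.1 hk, rfl⟩)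

variable [FiniteDimensional ℝ V] {n : ℕ} (h : Module.finrank ℝ V = Fintype.card (Fin n))
  (f : Fin n → V) (i : Fin n)

lemma inner_gramSchmidtOrthonormalBasis_eq_zero_of_mem_span {w : V}
    (hw : w ∈ Submodule.span ℝ (f '' Set.Iio i)) :
    ⟪w, gramSchmidtOrthonormalBasis h f i⟫ = 0 := by
  rw [real_inner_comm, ← Submodule.mem_orthogonal_singleton_iff_inner_right]
  refine Submodule.span_le.2 ?_ hw
  rintro _ ⟨j, hj, rfl⟩
  exact Submodule.mem_orthogonal_singleton_iff_inner_right.2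
    (gramSchmidtOrthonormalBasis_inv_triangular h f hj)

lemma abs_inner_gramSchmidtOrthonormalBasis_le_infDist (z : V) :
    |⟪z, gramSchmidtOrthonormalBasis h f i⟫| ≤
      Metric.infDist z (Submodule.span ℝ (f '' Set.Iio i)) := by
  refine (Metric.le_infDist ⟨0, Submodule.zero_mem _⟩).2 fun w hw => ?_
  have horth := inner_gramSchmidtOrthonormalBasis_eq_zero_of_mem_span h f i hw
  calc |⟪z, gramSchmidtOrthonormalBasis h f i⟫|
      = |⟪z - w, gramSchmidtOrthonormalBasis h f i⟫| := by rw [inner_sub_left, horth, sub_zero]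
    _ ≤ ‖z - w‖ * ‖gramSchmidtOrthonormalBasis h f i‖ := abs_real_inner_le_norm _ _
    _ = dist z w := by rw [OrthonormalBasis.norm_eq_one, mul_one, dist_eq_norm]

lemma infDist_span_le_abs_inner_gramSchmidtOrthonormalBasis :
    Metric.infDist (f i) (Submodule.span ℝ (f '' Set.Iio i)) ≤
      |⟪f i, gramSchmidtOrthonormalBasis h f i⟫| := by
  have hmem := sub_gramSchmidt_mem_span f i
  by_cases hg : gramSchmidt ℝ f i = 0
  · rw [hg, sub_zero] at hmem
    rw [Metric.infDist_zero_of_mem hmem]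
    positivity
  have hnorm : gramSchmidtNormed ℝ f i ≠ 0 := by simpa [gramSchmidtNormed] using hg
  have hbasis : gramSchmidtOrthonormalBasis h f i =
      ‖gramSchmidt ℝ f i‖⁻¹ • gramSchmidt ℝ f i :=
    gramSchmidtOrthonormalBasis_apply h hnorm
  have horth := inner_gramSchmidtOrthonormalBasis_eq_zero_of_mem_span h f i hmem
  rw [inner_sub_left, sub_eq_zero] at horth
  calc Metric.infDist (f i) (Submodule.span ℝ (f '' Set.Iio i))
      ≤ dist (f i) (f i - gramSchmidt ℝ f i) := Metric.infDist_le_dist_of_mem hmem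
    _ = ‖gramSchmidt ℝ f i‖ := by rw [dist_eq_norm, _root_.sub_sub_cancel]
    _ = |⟪f i, gramSchmidtOrthonormalBasis h f i⟫| := by
        rw [horth, hbasis, inner_smul_right, real_inner_self_eq_norm_sq, pow_two,
          inv_mul_cancel_left₀ (norm_ne_zero_iff.2 hg), abs_norm]

end GramSchmidt

lemma span_range_ne_top_of_lt_finrank {k : ℕ} (hk : k < Module.finrank ℝ V) (y : Fin k → V) :
    Submodule.span ℝ (Set.range y) ≠ ⊤ := by
  intro htop
  have hle := finrank_range_le_card (R := ℝ) y
  rw [Set.finrank, htop, finrank_top, Fintype.card_fin] at hle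
  exact hle.not_gt hk

variable [FiniteDimensional ℝ V] [MeasurableSpace V] [BorelSpace V]

lemma volume_parallelepiped_eq_abs_det {ι : Type*} [Fintype ι] [DecidableEq ι]
    (e : OrthonormalBasis ι ℝ V) (f : ι → V) :
    volume (parallelepiped f) = ENNReal.ofReal |e.toBasis.det f| := by
  rw [← e.addHaar_eq_volume, Measure.addHaar_parallelepiped]

variable {n : ℕ}

lemma measurable_volume_parallelepiped (hdim : Module.finrank ℝ V = n) :
    Measurable fun f : Fin n → V => volume (parallelepiped f) := by
  let e := (stdOrthonormalBasis ℝ V).reindex (finCongr hdim)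
  simp only [volume_parallelepiped_eq_abs_det e, Module.Basis.det_apply, Matrix.det_apply,
    Module.Basis.toMatrix_apply, OrthonormalBasis.coe_toBasis_repr_apply,
    OrthonormalBasis.repr_apply_apply]
  fun_prop

lemma volume_parallelepiped_eq_prod_gramSchmidtOrthonormalBasis
    (h : Module.finrank ℝ V = Fintype.card (Fin n)) (f : Fin n → V) :
    volume (parallelepiped f) =
      ENNReal.ofReal (∏ i, |⟪f i, InnerProductSpace.gramSchmidtOrthonormalBasis h f i⟫|) := by
  rw [volume_parallelepiped_eq_abs_det (InnerProductSpace.gramSchmidtOrthonormalBasis h f),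
    InnerProductSpace.gramSchmidtOrthonormalBasis_det, Finset.abs_prod]
  simp only [real_inner_comm]

lemma exists_dyadic_infDist (hdim : Module.finrank ℝ V = n) {ν : Measure V} [IsFiniteMeasure ν]
    [NeZero ν] {W : Submodule ℝ V} (hW : W ≠ ⊤) (hν : ν W = 0) :
    ∃ r : ℝ, 0 < r ∧ ν Set.univ / (2 * n) ≤ ν {z | r ≤ Metric.infDist z W} ∧
      ν {z | 2 * r ≤ Metric.infDist z W} ≤ ν Set.univ / (2 * n) := by
  have hn : 1 < 2 * n := by
    have := Submodule.finrank_lt hW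
    omega
  have hfar : {z | 0 < Metric.infDist z W} = (W : Set V)ᶜ := by
    ext z
    exact (W.closed_of_finiteDimensional.notMem_iff_infDist_pos ⟨0, W.zero_mem⟩).symm
  refine exists_dyadic_quantile (Metric.continuous_infDist_pt _).measurable
    (ENNReal.div_ne_zero.2 ⟨NeZero.ne' _ |>.symm, by finiteness⟩) ?_
  rw [hfar, measure_compl W.closed_of_finiteDimensional.measurableSet (measure_ne_top _ _), hν,
    tsub_zero]
  refine ENNReal.div_lt_of_lt_mul ?_
  conv_lhs => rw [← mul_one (ν Set.univ)]
  exact ENNReal.mul_lt_mul_right (NeZero.ne _) (measure_ne_top _ _) (by exact_mod_cast hn)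

-- Greedy choice: each `y i` is about as far from the span of its predecessors as all but a fraction
-- `1 / (2n)` of `ν` is.
lemma exists_greedy_tuple (hdim : Module.finrank ℝ V = n) {ν : Measure V} [IsFiniteMeasure ν]
    [NeZero ν] (hν : ∀ W : Submodule ℝ V, W ≠ ⊤ → ν W = 0) :
    ∃ (y : Fin n → V) (r : Fin n → ℝ), (∀ i, 0 < r i ∧
        r i ≤ Metric.infDist (y i) (Submodule.span ℝ (y '' Set.Iio i)) ∧
        ν {z | 2 * r i ≤ Metric.infDist z (Submodule.span ℝ (y '' Set.Iio i))} ≤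
          ν Set.univ / (2 * n)) ∧
      volume (parallelepiped y) * (ν Set.univ / (2 * n)) ^ n ≤
        ∫⁻ y, volume (parallelepiped y) ∂Measure.pi fun _ : Fin n => ν := by
  have hη : ν Set.univ / (2 * n) ≠ 0 :=
    ENNReal.div_ne_zero.2 ⟨NeZero.ne' _ |>.symm, by finiteness⟩
  choose! r hr using fun (W : Submodule ℝ V) hW => exists_dyadic_infDist hdim hW (hν W hW)
  have hproper : ∀ k < n, ∀ y : Fin k → V, Submodule.span ℝ (Set.range y) ≠ ⊤ :=
    fun k hk => span_range_ne_top_of_lt_finrank (hdim ▸ hk)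
  obtain ⟨y, hyS, hy⟩ := exists_mem_tuple_mul_pow_le_lintegral_pi hη (m := n)
    (S := fun k y => {z | r (Submodule.span ℝ (Set.range y)) ≤
      Metric.infDist z (Submodule.span ℝ (Set.range y))})
    (fun k hk y => (hr _ (hproper k hk y)).2.1) (measurable_volume_parallelepiped hdim)
  have hrange : ∀ i : Fin n, Set.range (Fin.take i i.isLt.le y) = y '' Set.Iio i := by
    intro i
    ext v
    constructor
    · rintro ⟨j, rfl⟩
      exact ⟨_, Fin.lt_def.2 j.isLt, rfl⟩
    · rintro ⟨j, hj, rfl⟩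
      exact ⟨⟨j, hj⟩, rfl⟩
  refine ⟨y, fun i => r (Submodule.span ℝ (y '' Set.Iio i)), fun i => ?_, hy⟩
  have hW := hproper i i.isLt (Fin.take i i.isLt.le y)
  have hyi := hyS i
  rw [hrange] at hW
  simp only [hrange] at hyi
  exact ⟨(hr _ hW).1, hyi, (hr _ hW).2.2⟩

lemma exists_greedy_orthoBox (hdim : Module.finrank ℝ V = n) {ν : Measure V} [IsFiniteMeasure ν]
    [NeZero ν] (hν : ∀ W : Submodule ℝ V, W ≠ ⊤ → ν W = 0) :
    ∃ (e : OrthonormalBasis (Fin n) ℝ V) (r : Fin n → ℝ), (∀ j, 0 < r j) ∧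
      ν Set.univ / 2 ≤ ν (orthoBox e 0 r) ∧
      ENNReal.ofReal (∏ j, r j / 2) * (ν Set.univ / (2 * n)) ^ n ≤
        ∫⁻ y, volume (parallelepiped y) ∂Measure.pi fun _ : Fin n => ν := by
  have hcard : Module.finrank ℝ V = Fintype.card (Fin n) := by rw [hdim, Fintype.card_fin]
  obtain ⟨y, r, hr, hy⟩ := exists_greedy_tuple hdim hν
  let e := InnerProductSpace.gramSchmidtOrthonormalBasis hcard y
  refine ⟨e, fun j => 2 * r j, fun j => mul_pos two_pos (hr j).1,
    half_le_measure_orthoBox e 0 _ fun i => ?_, ?_⟩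
  · rw [Fintype.card_fin]
    simp only [sub_zero]
    exact (measure_mono fun z hz => (show 2 * r i ≤ |⟪z, e i⟫| from hz).trans
      (abs_inner_gramSchmidtOrthonormalBasis_le_infDist hcard y i z)).trans (hr i).2.2
  · refine le_trans ?_ hy
    rw [volume_parallelepiped_eq_prod_gramSchmidtOrthonormalBasis hcard]
    gcongr with i
    · exact fun i _ => by linarith [(hr i).1]
    · rw [mul_div_cancel_left₀ _ two_ne_zero]
      exact (hr i).2.1.trans (infDist_span_le_abs_inner_gramSchmidtOrthonormalBasis hcard y i)

lemma exists_greedy_orthoBox_inter (hdim : Module.finrank ℝ V = n) {A : Set V}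
    (hA : MeasurableSet A) (hA0 : volume A ≠ 0) (hAtop : volume A ≠ ⊤) (c : V) :
    ∃ (e : OrthonormalBasis (Fin n) ℝ V) (r : Fin n → ℝ), (∀ j, 0 < r j) ∧
      volume A / 2 ≤ volume (A ∩ orthoBox e c r) ∧
      ENNReal.ofReal (∏ j, r j / 2) * (volume A / (2 * n)) ^ n ≤
        ∫⁻ y, volume (parallelepiped fun j => y j - c)
          ∂Measure.pi fun _ : Fin n => volume.restrict A := by
  have : IsFiniteMeasure (volume.restrict A) := ⟨by simpa using hAtop.lt_top⟩
  let shift : V ≃ᵐ V := MeasurableEquiv.subRight c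
  let ν := (volume.restrict A).map shift
  have hν_apply : ∀ S, ν S = volume (shift ⁻¹' S ∩ A) := fun S => by
    rw [MeasurableEquiv.map_apply, Measure.restrict_apply' hA]
  have huniv : ν Set.univ = volume A := by simp [hν_apply]
  have : IsFiniteMeasure ν := ⟨by simpa [huniv] using hAtop.lt_top⟩
  have : NeZero ν := ⟨fun h => hA0 (by rw [← huniv, h]; rfl)⟩
  have hnull : ∀ W : Submodule ℝ V, W ≠ ⊤ → ν W = 0 := by
    intro W hW
    rw [hν_apply]
    refine measure_mono_null Set.inter_subset_left ?_
    exact (measurePreserving_sub_right volume c).measure_preimage_equiv (f := shift) _ |>.trans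
      (Measure.addHaar_submodule volume W hW)
  obtain ⟨e, r, hr, hbox, hdet⟩ := exists_greedy_orthoBox hdim hnull
  refine ⟨e, r, hr, ?_, ?_⟩
  · have hpre : shift ⁻¹' orthoBox e 0 r = orthoBox e c r := by
      simp only [orthoBox, sub_zero]
      rfl
    rwa [huniv, hν_apply, hpre, Set.inter_comm] at hbox
  · rw [huniv] at hdet
    refine hdet.trans_eq ?_
    have hpi : Measure.pi (fun _ : Fin n => ν) =
        (Measure.pi fun _ => volume.restrict A).map fun y j => shift (y j) :=
      (Measure.pi_map_pi fun _ => shift.measurable.aemeasurable).symm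
    rw [hpi, lintegral_map (measurable_volume_parallelepiped hdim) (by fun_prop)]
    rfl

end GreedyBox

section Parallelepiped

lemma lintegral_volume_pi_prodMk_preimage {ι X Y : Type*} [Fintype ι] [MeasureSpace X]
    [MeasureSpace Y] [SigmaFinite (volume : Measure X)] [SigmaFinite (volume : Measure Y)]
    {F : Set (X × Y)} (hF : MeasurableSet F) :
    ∫⁻ x : ι → X, volume {y : ι → Y | ∀ j, (x j, y j) ∈ F} = volume F ^ Fintype.card ι := by
  have hmeas : MeasurableSet {p : (ι → X) × (ι → Y) | ∀ j, (p.1 j, p.2 j) ∈ F} := by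
    rw [Set.ofPred_forall]
    exact .iInter fun j => (show Measurable fun p : (ι → X) × (ι → Y) => (p.1 j, p.2 j) by
      fun_prop) hF
  have hzip := (volume_measurePreserving_arrowProdEquivProdArrow X Y ι).measure_preimage
    hmeas.nullMeasurableSet
  have hpre : MeasurableEquiv.arrowProdEquivProdArrow X Y ι ⁻¹'
      {p | ∀ j, (p.1 j, p.2 j) ∈ F} = Set.univ.pi fun _ => F := by
    ext p
    simp [MeasurableEquiv.arrowProdEquivProdArrow, Equiv.arrowProdEquivProdArrow]
  rw [hpre, volume_pi_pi, Finset.prod_const, Finset.card_univ] at hzip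
  rw [hzip, Measure.volume_eq_prod, Measure.prod_apply hmeas]
  rfl

variable {V : Type*} [NormedAddCommGroup V] [InnerProductSpace ℝ V] [FiniteDimensional ℝ V]
  [MeasurableSpace V] [BorelSpace V] {n : ℕ}

lemma volume_parallelepiped_le_volume_parallelepiped_smul (e : OrthonormalBasis (Fin n) ℝ V)
    (f : Fin n → V) {a : ℝ} (ha : 1 ≤ |a|) :
    volume (parallelepiped f) ≤ volume (parallelepiped fun j => a • f j) := by
  rw [volume_parallelepiped_eq_abs_det e, volume_parallelepiped_eq_abs_det e,
    AlternatingMap.map_smul_univ _ (fun _ => a), smul_eq_mul, abs_mul, Finset.abs_prod,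
    Finset.prod_const]
  exact ENNReal.ofReal_le_ofReal (le_mul_of_one_le_left (abs_nonneg _) (one_le_pow₀ ha))

lemma volume_parallelepiped_mul_volume_preimage_le (e : OrthonormalBasis (Fin n) ℝ V)
    (f : Fin n → V) (b : Fin n → ℝ) {T : Set (Fin n → ℝ)} (hT : MeasurableSet T) :
    volume (parallelepiped f) * volume {x : V | (fun j => b j + ⟪x, f j⟫) ∈ T} ≤ volume T := by
  let L := Matrix.toLin' (e.toBasis.toMatrix f).transpose
  have hdet : LinearMap.det L = e.toBasis.det f := by
    rw [LinearMap.det_toLin', Matrix.det_transpose, Module.Basis.det_apply]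
  rw [volume_parallelepiped_eq_abs_det e, ← hdet]
  by_cases h0 : LinearMap.det L = 0
  · simp [h0]
  have hpre : {x : V | (fun j => b j + ⟪x, f j⟫) ∈ T} =
      orthoCoord e ⁻¹' (L ⁻¹' ((b + ·) ⁻¹' T)) := by
    ext x
    have hcoord : (fun j => b j + ⟪x, f j⟫) = b + L (orthoCoord e x) := by
      funext j
      simp only [L, Pi.add_apply, inner_eq_sum_orthoCoord e x (f j), orthoCoord,
        real_inner_comm (e _) (f j), Matrix.toLin'_apply, Matrix.mulVec, dotProduct,
        Matrix.transpose_apply, Module.Basis.toMatrix_apply, e.coe_toBasis_repr_apply,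
        e.repr_apply_apply]
    simp only [Set.mem_ofPred_eq, Set.mem_preimage, hcoord]
  have hmeas : MeasurableSet (L ⁻¹' ((b + ·) ⁻¹' T)) :=
    L.continuous_of_finiteDimensional.measurable (hT.preimage (measurable_const_add b))
  rw [hpre, (measurePreserving_orthoCoord e).measure_preimage hmeas.nullMeasurableSet,
    Measure.addHaar_preimage_linearMap _ h0, measure_preimage_add, ← mul_assoc,
    ← ENNReal.ofReal_mul (abs_nonneg _), ← abs_mul, mul_inv_cancel₀ h0, abs_one,
    ENNReal.ofReal_one, one_mul]

lemma lintegral_lintegral_pi_restrict {ι X Y : Type*} [Fintype ι] [MeasurableSpace X]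
    [MeasurableSpace Y] {μ : Measure X} [SFinite μ] {ν : Measure Y} [SigmaFinite ν]
    {S : Set (X × Y)} (hS : MeasurableSet S) {D : (ι → Y) → ℝ≥0∞} (hD : Measurable D) :
    ∫⁻ x, ∫⁻ y, D y ∂Measure.pi (fun _ => ν.restrict (Prod.mk x ⁻¹' S)) ∂μ =
      ∫⁻ y, D y * μ {x | ∀ j, (x, y j) ∈ S} ∂Measure.pi fun _ => ν := by
  let P : Set (X × (ι → Y)) := {p | ∀ j, (p.1, p.2 j) ∈ S}
  have hP : MeasurableSet P := by
    simp only [P, Set.ofPred_forall]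
    exact .iInter fun j => (show Measurable fun p : X × (ι → Y) => (p.1, p.2 j) by fun_prop) hS
  have : Measurable (P.indicator (1 : X × (ι → Y) → ℝ≥0∞)) := measurable_one.indicator hP
  have hinner : ∀ x, ∫⁻ y, D y ∂Measure.pi (fun _ => ν.restrict (Prod.mk x ⁻¹' S)) =
      ∫⁻ y, D y * P.indicator 1 (x, y) ∂Measure.pi fun _ => ν := by
    intro x
    rw [← Measure.restrict_pi_pi,
      ← lintegral_indicator (.univ_pi fun _ => measurable_prodMk_left hS)]
    refine lintegral_congr fun y => ?_
    have hiff : y ∈ Set.univ.pi (fun _ => Prod.mk x ⁻¹' S) ↔ (x, y) ∈ P := by simp [P]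
    by_cases h : (x, y) ∈ P
    · rw [Set.indicator_of_mem h, Set.indicator_of_mem (hiff.2 h), Pi.one_apply, mul_one]
    · rw [Set.indicator_of_notMem h, Set.indicator_of_notMem (hiff.not.2 h), mul_zero]
  simp only [hinner]
  rw [lintegral_lintegral_swap (by fun_prop)]
  refine lintegral_congr fun y => ?_
  have hslice : MeasurableSet {x | ∀ j, (x, y j) ∈ S} := measurable_prodMk_right hP
  rw [lintegral_const_mul _ (by fun_prop), ← lintegral_indicator_one hslice]
  rfl

-- The points `y j` lie on a common paraboloid through `z`, whose vertex is determined by its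
-- projection `x`; the heights of the `y j` are affine in `x` with Jacobian `± det (2 (y j - z.1))`.
lemma lintegral_volume_parallelepiped_pi_paraboloidSection_le (e : OrthonormalBasis (Fin n) ℝ V)
    (z : V × ℝ) {s : ℝ} (hs : |s| = 1) {F : Set (V × ℝ)} (hF : MeasurableSet F) :
    ∫⁻ x, ∫⁻ y, volume (parallelepiped fun j => y j - z.1) ∂Measure.pi (fun _ : Fin n =>
        volume.restrict (paraboloidSection (-s) F (paraboloidLift s z x))) ≤ volume F ^ n := by
  have hS : MeasurableSet {p : V × V | paraboloidLift (-s) (paraboloidLift s z p.1) p.2 ∈ F} := by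
    refine (?_ : Measurable fun p : V × V =>
      paraboloidLift (-s) (paraboloidLift s z p.1) p.2) hF
    unfold paraboloidLift
    fun_prop
  have hD : Measurable fun y : Fin n → V => volume (parallelepiped fun j => y j - z.1) :=
    (measurable_volume_parallelepiped (by
      simpa using Module.finrank_eq_card_basis e.toBasis)).comp (by fun_prop)
  rw [← Fintype.card_fin n, ← lintegral_volume_pi_prodMk_preimage hF, Fintype.card_fin]
  refine (lintegral_lintegral_pi_restrict hS hD).trans_le (lintegral_mono fun y => ?_)
  have hT : MeasurableSet {t : Fin n → ℝ | ∀ j, (y j, t j) ∈ F} := by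
    rw [Set.ofPred_forall]
    exact .iInter fun j => (show Measurable fun t : Fin n → ℝ => (y j, t j) by fun_prop) hF
  refine le_trans ?_ (volume_parallelepiped_mul_volume_preimage_le e
    (fun j => (2 * s) • (y j - z.1)) (fun j => z.2 + s * (‖z.1‖ ^ 2 - ‖y j‖ ^ 2)) hT)
  simp only [Set.mem_ofPred_eq, paraboloidLift_neg_lift_eq]
  exact mul_le_mul' (volume_parallelepiped_le_volume_parallelepiped_smul e _
    (by rw [abs_mul, hs]; norm_num)) le_rfl

end Parallelepiped

section RichFan

variable {V : Type*} [NormedAddCommGroup V] [InnerProductSpace ℝ V] [FiniteDimensional ℝ V]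
  [MeasurableSpace V] [BorelSpace V] {n : ℕ}

/-- A large set `A` of points `y` incident to `x₀`, contained in the box of half side lengths `r`
around `y₀`, each of which is incident to many points of `E` that are themselves `α / 2`-rich
in `F`. -/
structure IsRichFan (E F : Set (V × ℝ)) (α β : ℝ) (e : OrthonormalBasis (Fin n) ℝ V)
    (x₀ y₀ : V × ℝ) (r : Fin n → ℝ) (A : Set V) : Prop where
  incident : paraboloidDefect 1 y₀ x₀ = 0
  side_pos : ∀ j, 0 < r j
  measurableSet : MeasurableSet A
  subset_orthoBox : A ⊆ orthoBox e y₀.1 r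
  le_volume : ENNReal.ofReal (α / 32) ≤ volume A
  rich : ∀ y ∈ A, ENNReal.ofReal (β / 4) ≤
    volume (paraboloidSection 1 (richPart (-1) (α / 2) E F) (paraboloidLift (-1) x₀ y))

lemma exists_le_volume_paraboloidSection_richPart {E F : Set (V × ℝ)} (hE : MeasurableSet E)
    (hF : MeasurableSet F) {a b α β : ℝ} (ha : 0 < a) (hb : 0 < b) (hα : 0 < α) (hβ : 0 < β)
    (hαβ : a * α = b * β) (hEa : volume E ≤ ENNReal.ofReal a) (hFb : volume F ≤ ENNReal.ofReal b)
    (h : ENNReal.ofReal (a * α) ≤ incidence (-1) E F) :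
    ∃ y₀, ENNReal.ofReal (β / 16) ≤ volume (paraboloidSection 1 (richPart (-1) (α / 8)
      (richPart (-1) (α / 2) E F) (richPart 1 (β / 4) F (richPart (-1) (α / 2) E F))) y₀) := by
  set E₁ := richPart (-1) (α / 2) E F
  set F₂ := richPart 1 (β / 4) F E₁
  set E₃ := richPart (-1) (α / 8) E₁ F₂
  have hE₁ : MeasurableSet E₁ := measurableSet_richPart _ _ hE hF
  have hF₂ : MeasurableSet F₂ := measurableSet_richPart _ _ hF hE₁
  have hE₁a : volume E₁ ≤ ENNReal.ofReal a := (measure_mono (richPart_subset _ _ _ _)).trans hEa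
  have hF₂b : volume F₂ ≤ ENNReal.ofReal b := (measure_mono (richPart_subset _ _ _ _)).trans hFb
  have h₁ : ENNReal.ofReal (b * (β / 2)) ≤ incidence 1 F E₁ := by
    have := ofReal_half_le_incidence_richPart hE hF ha.le hα.le hEa h
    rwa [neg_neg, hαβ, mul_div_assoc] at this
  have h₂ : ENNReal.ofReal (a * (α / 4)) ≤ incidence (-1) E₁ F₂ := by
    have := ofReal_half_le_incidence_richPart hF hE₁ hb.le (by positivity) hFb h₁
    rwa [show β / 2 / 2 = β / 4 by ring, show b * (β / 2) / 2 = a * (α / 4) by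
      linear_combination -hαβ / 4] at this
  have h₃ : ENNReal.ofReal (b * (β / 8)) ≤ incidence 1 F₂ E₃ := by
    have := ofReal_half_le_incidence_richPart hE₁ hF₂ ha.le (by positivity) hE₁a h₂
    rwa [neg_neg, show α / 4 / 2 = α / 8 by ring, show a * (α / 4) / 2 = b * (β / 8) by
      linear_combination hαβ / 8] at this
  by_contra! hpoor
  refine h₃.not_gt ?_
  calc incidence 1 F₂ E₃ ≤ ∫⁻ _ in F₂, ENNReal.ofReal (β / 16) :=
        lintegral_mono fun y => (hpoor y).le
    _ ≤ ENNReal.ofReal (β / 16) * ENNReal.ofReal b := by rw [setLIntegral_const]; gcongr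
    _ < ENNReal.ofReal (b * (β / 8)) := by
        rw [← ENNReal.ofReal_mul (by positivity), ENNReal.ofReal_lt_ofReal_iff (by positivity)]
        linarith [mul_pos hb hβ]

lemma exists_mem_lintegral_volume_parallelepiped_lt (e : OrthonormalBasis (Fin n) ℝ V)
    {F : Set (V × ℝ)} (hF : MeasurableSet F) {b β : ℝ} (hb : 0 < b) (hβ : 0 < β)
    (hFb : volume F ≤ ENNReal.ofReal b) (z : V × ℝ) {X : Set V} (hX : MeasurableSet X)
    (hXβ : ENNReal.ofReal (2 * β) ≤ volume X) :
    ∃ x ∈ X, ∫⁻ y, volume (parallelepiped fun j => y j - z.1) ∂Measure.pi (fun _ : Fin n =>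
      volume.restrict (paraboloidSection (-1) F (paraboloidLift 1 z x))) <
        ENNReal.ofReal (b ^ n / β) := by
  refine exists_mem_lt_of_setLIntegral_lt (μ := volume) hX ?_
  calc ∫⁻ x in X, ∫⁻ y, volume (parallelepiped fun j => y j - z.1) ∂Measure.pi (fun _ : Fin n =>
        volume.restrict (paraboloidSection (-1) F (paraboloidLift 1 z x)))
      ≤ volume F ^ n := (setLIntegral_le_lintegral _ _).trans
        (lintegral_volume_parallelepiped_pi_paraboloidSection_le e z abs_one hF)
    _ ≤ ENNReal.ofReal (b ^ n) := by rw [ENNReal.ofReal_pow hb.le]; gcongr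
    _ < ENNReal.ofReal (b ^ n / β * (2 * β)) := by
        rw [ENNReal.ofReal_lt_ofReal_iff (by positivity)]
        have : 0 < b ^ n := by positivity
        field_simp
        linarith
    _ ≤ ENNReal.ofReal (b ^ n / β) * volume X := by
        rw [ENNReal.ofReal_mul (by positivity)]; gcongr

lemma exists_orthoBox_prod_mul_le (hn : 0 < n) (hdim : Module.finrank ℝ V = n) {S : Set V}
    (hS : MeasurableSet S) {α D : ℝ} (hα : 0 < α) (hD : 0 ≤ D)
    (hSα : ENNReal.ofReal (2 * α) ≤ volume S) (c : V)
    (hSD : ∫⁻ y, volume (parallelepiped fun j => y j - c)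
      ∂Measure.pi (fun _ : Fin n => volume.restrict S) ≤ ENNReal.ofReal D) :
    ∃ (e : OrthonormalBasis (Fin n) ℝ V) (r : Fin n → ℝ) (A : Set V), (∀ j, 0 < r j) ∧
      MeasurableSet A ∧ A ⊆ S ∩ orthoBox e c r ∧ ENNReal.ofReal (α / 2) ≤ volume A ∧
      (∏ j, r j) * α ^ n ≤ (4 * n) ^ n * D := by
  obtain ⟨A, hA, hAS, hαA, hAtop⟩ := Measure.exists_subset_measure_lt_top hS
    (r := ENNReal.ofReal α) (hSα.trans_lt' ((ENNReal.ofReal_lt_ofReal_iff (by positivity)).2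
      (by linarith)))
  obtain ⟨e, r, hr, hbox, hdet⟩ := exists_greedy_orthoBox_inter hdim hA
    (zero_le.trans_lt hαA).ne' hAtop.ne c
  refine ⟨e, r, A ∩ orthoBox e c r, hr, hA.inter (measurableSet_orthoBox e c r),
    Set.inter_subset_inter_left _ hAS, ?_, ?_⟩
  · rw [ENNReal.ofReal_div_of_pos two_pos, ENNReal.ofReal_ofNat]
    exact (ENNReal.div_le_div_right hαA.le 2).trans hbox
  have hmono : Measure.pi (fun _ : Fin n => volume.restrict A) ≤
      Measure.pi fun _ => volume.restrict S := by
    rw [← Measure.restrict_pi_pi, ← Measure.restrict_pi_pi]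
    exact Measure.restrict_mono (Set.pi_mono fun _ _ => hAS) le_rfl
  have hratio : ENNReal.ofReal (α / (2 * n)) ≤ volume A / (2 * n) := by
    rw [ENNReal.ofReal_div_of_pos (by positivity), ENNReal.ofReal_mul two_pos.le,
      ENNReal.ofReal_ofNat, ENNReal.ofReal_natCast]
    gcongr
  have hprod : ENNReal.ofReal (∏ j, r j / 2) * ENNReal.ofReal (α / (2 * n)) ^ n ≤
      ENNReal.ofReal D :=
    ((mul_le_mul_right (pow_le_pow_left₀ zero_le hratio n) _).trans hdet).trans
      ((lintegral_mono' hmono le_rfl).trans hSD)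
  have hr0 : 0 ≤ ∏ j, r j / 2 := Finset.prod_nonneg fun j _ => (half_pos (hr j)).le
  rw [← ENNReal.ofReal_pow (by positivity), ← ENNReal.ofReal_mul hr0,
    ENNReal.ofReal_le_ofReal_iff hD, Finset.prod_div_distrib, Finset.prod_const,
    Finset.card_univ, Fintype.card_fin, div_pow, div_mul_div_comm, ← mul_pow,
    div_le_iff₀ (by positivity)] at hprod
  rwa [mul_comm D, ← mul_assoc 2 2 (n : ℝ), show (2 : ℝ) * 2 = 4 by norm_num] at hprod

lemma exists_isRichFan (hn : 0 < n) (hdim : Module.finrank ℝ V = n) {E F : Set (V × ℝ)}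
    (hE : MeasurableSet E) (hF : MeasurableSet F) {a b α β : ℝ} (ha : 0 < a) (hb : 0 < b)
    (hα : 0 < α) (hβ : 0 < β) (hαβ : a * α = b * β) (hEa : volume E ≤ ENNReal.ofReal a)
    (hFb : volume F ≤ ENNReal.ofReal b) (h : ENNReal.ofReal (a * α) ≤ incidence (-1) E F) :
    ∃ (e : OrthonormalBasis (Fin n) ℝ V) (x₀ y₀ : V × ℝ) (r : Fin n → ℝ) (A : Set V),
      IsRichFan E F α β e x₀ y₀ r A ∧
      (∏ j, r j) * α ^ n * β ≤ 32 * (64 * n) ^ n * b ^ n := by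
  obtain ⟨y₀, hy₀⟩ := exists_le_volume_paraboloidSection_richPart hE hF ha hb hα hβ hαβ hEa hFb h
  set E₁ := richPart (-1) (α / 2) E F
  set F₂ := richPart 1 (β / 4) F E₁
  have hE₁ : MeasurableSet E₁ := measurableSet_richPart _ _ hE hF
  have hF₂ : MeasurableSet F₂ := measurableSet_richPart _ _ hF hE₁
  obtain ⟨x, hx, hdet⟩ := exists_mem_lintegral_volume_parallelepiped_lt
    ((stdOrthonormalBasis ℝ V).reindex (finCongr hdim)) hF₂ hb (β := β / 32) (by positivity)
    ((measure_mono (richPart_subset _ _ _ _)).trans hFb) y₀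
    (measurableSet_paraboloidSection 1 (measurableSet_richPart _ _ hE₁ hF₂) y₀)
    (hy₀.trans' (by rw [show 2 * (β / 32) = β / 16 by ring]))
  set x₀ := paraboloidLift 1 y₀ x
  have hx₀ : ENNReal.ofReal (α / 8) ≤ volume (paraboloidSection (-1) F₂ x₀) := hx.2
  obtain ⟨e, r, A, hr, hA, hAS, hAα, hprod⟩ := exists_orthoBox_prod_mul_le hn hdim
    (measurableSet_paraboloidSection (-1) hF₂ x₀) (α := α / 16) (by positivity) (by positivity)
    (by rwa [show 2 * (α / 16) = α / 8 by ring]) y₀.1 hdet.le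
  refine ⟨e, x₀, y₀, r, A, ⟨paraboloidDefect_lift 1 y₀ x, hr, hA,
    hAS.trans Set.inter_subset_right, by rwa [show α / 32 = α / 16 / 2 by ring],
    fun y hy => (hAS hy).1.2⟩, ?_⟩
  rw [div_pow, ← mul_div_assoc, div_le_iff₀ (by positivity), ← mul_div_assoc, div_mul_eq_mul_div,
    le_div_iff₀ (by positivity)] at hprod
  calc (∏ j, r j) * α ^ n * β = 32 * ((∏ j, r j) * α ^ n * (β / 32)) := by ring
    _ ≤ 32 * ((4 * n) ^ n * b ^ n * 16 ^ n) := by gcongr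
    _ = 32 * (64 * n) ^ n * b ^ n := by
        rw [show (64 * n : ℝ) = 4 * n * 16 by ring, mul_pow (4 * n : ℝ)]; ring

end RichFan

section Localization

variable {V : Type*} [NormedAddCommGroup V] [InnerProductSpace ℝ V] {n : ℕ}

lemma paraboloidDefect_four_point (s : ℝ) (x x' y y' : V × ℝ) :
    paraboloidDefect s y x - paraboloidDefect s y' x - paraboloidDefect s y x' +
      paraboloidDefect s y' x' = 2 * s * ⟪x.1 - x'.1, y.1 - y'.1⟫ := by
  simp only [paraboloidDefect, norm_sub_sq_real, inner_sub_left, inner_sub_right]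
  ring

variable (e : OrthonormalBasis (Fin n) ℝ V) {r rs : Fin n → ℝ} {ρ κ κ' : ℝ}

lemma abs_inner_le_of_mem_orthoBox (hρ : ∀ j, r j * rs j = ρ) {x c y c' : V}
    (hx : x ∈ orthoBox e c (κ • r)) (hy : y ∈ orthoBox e c' (κ' • rs)) :
    |⟪x - c, y - c'⟫| ≤ n * (κ * κ' * ρ) := by
  have hterm : ∀ j, |orthoCoord e (y - c') j * orthoCoord e (x - c) j| ≤ κ * κ' * ρ := by
    intro j
    rw [abs_mul]
    calc |orthoCoord e (y - c') j| * |orthoCoord e (x - c) j|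
        ≤ (κ' * rs j) * (κ * r j) :=
          mul_le_mul (hy j).le (hx j).le (abs_nonneg _) ((abs_nonneg _).trans (hy j).le)
      _ = κ * κ' * ρ := by rw [← hρ j]; ring
  rw [inner_eq_sum_orthoCoord e]
  refine (Finset.abs_sum_le_sum_abs _ _).trans ((Finset.sum_le_sum fun j _ => hterm j).trans_eq ?_)
  rw [Finset.sum_const, Finset.card_univ, Fintype.card_fin, nsmul_eq_mul]

lemma abs_paraboloidDefect_add_le (hρ : ∀ j, r j * rs j = ρ) {x x₀ y y₀ : V × ℝ}
    (hx : x.1 ∈ orthoBox e x₀.1 (κ • r)) (hy : y.1 ∈ orthoBox e y₀.1 (κ' • rs))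
    (hxy : paraboloidDefect 1 y x = 0) (h₀ : paraboloidDefect 1 y₀ x₀ = 0) :
    |paraboloidDefect 1 y₀ x + paraboloidDefect 1 y x₀| ≤ 2 * (n * (κ * κ' * ρ)) := by
  have hfour := paraboloidDefect_four_point 1 x x₀ y y₀
  rw [hxy, h₀, mul_one] at hfour
  rw [show paraboloidDefect 1 y₀ x + paraboloidDefect 1 y x₀ = -(2 * ⟪x.1 - x₀.1, y.1 - y₀.1⟫) by
    linarith, abs_neg, abs_mul, abs_two]
  gcongr
  exact abs_inner_le_of_mem_orthoBox e hρ hx hy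

lemma orthoBox_mono {ι : Type*} [Fintype ι] (e : OrthonormalBasis ι ℝ V) (c : V) {r r' : ι → ℝ}
    (h : r ≤ r') : orthoBox e c r ⊆ orthoBox e c r' :=
  fun _ hy j => (hy j).trans_le (h j)

lemma mem_orthoBox_add_smul {ι : Type*} [Fintype ι] (e : OrthonormalBasis ι ℝ V) {r : ι → ℝ}
    {c y w : V} (hw : w ∈ orthoBox e y (κ • r)) (hy : y ∈ orthoBox e c (κ' • r)) :
    w ∈ orthoBox e c ((κ + κ') • r) := by
  intro j
  rw [← sub_add_sub_cancel w y c, inner_add_left, add_smul]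
  exact (abs_add_le _ _).trans_lt (add_lt_add (hw j) (hy j))

-- Four-point identity twice: `x` and `x₀` are joined through the common neighbour `y`, and then
-- `w` and `y₀` through the approximate neighbour `x`.
lemma twoStep_mem_paraboloidBox (hr : ∀ j, 0 < r j) (hrs : ∀ j, 0 < rs j)
    (hρ : ∀ j, r j * rs j = ρ) {x₀ y₀ : V × ℝ} (h₀ : paraboloidDefect 1 y₀ x₀ = 0) {R R₂ R₃ : ℝ}
    (hR : 1 ≤ R) (hR₂ : 0 < R₂) (hR₃ : 2 * n * R * (R₂ + 2) < R₃) (j : Fin n) {y : V}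
    (hy : y ∈ orthoBox e y₀.1 rs) {x : V} (hx : x ∈ orthoBox e x₀.1 (R • r)) :
    paraboloidLift 1 (paraboloidLift (-1) x₀ y) x ∈
        paraboloidBox 1 e x₀.1 y₀ (R₃ • r) (R₃ * ρ) ∧
      ∀ w ∈ orthoBox e y (R₂ • rs),
        paraboloidLift (-1) (paraboloidLift 1 (paraboloidLift (-1) x₀ y) x) w ∈
          paraboloidBox (-1) e y₀.1 x₀ (R₃ • rs) (R₃ * ρ) := by
  set y₁ := paraboloidLift (-1) x₀ y
  set x₁ := paraboloidLift 1 y₁ x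
  have hn : (1 : ℝ) ≤ n := by exact_mod_cast j.pos
  have hρ0 : 0 < ρ := hρ j ▸ mul_pos (hr j) (hrs j)
  have hnR : R ≤ n * R := le_mul_of_one_le_left (by linarith) hn
  have hRR₃ : R ≤ R₃ := by nlinarith
  have hR₂R₃ : R₂ + 1 ≤ R₃ := by nlinarith
  have hx₀y₁ : paraboloidDefect 1 y₁ x₀ = 0 := paraboloidDefect_lift_neg 1 x₀ y
  have hx₁y₀ : |paraboloidDefect 1 y₀ x₁| ≤ 2 * (n * (R * 1 * ρ)) := by
    have := abs_paraboloidDefect_add_le (x := x₁) (y := y₁) e hρ hx (by rwa [one_smul])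
      (paraboloidDefect_lift 1 y₁ x) h₀
    rwa [hx₀y₁, add_zero] at this
  refine ⟨⟨orthoBox_mono e _ (fun i => ?_) hx, ?_⟩, fun w hw => ?_⟩
  · exact mul_le_mul_of_nonneg_right hRR₃ (hr i).le
  · have : 0 < n * R * ρ := by positivity
    nlinarith
  set w₁ := paraboloidLift (-1) x₁ w
  have hw : w ∈ orthoBox e y₀.1 ((R₂ + 1) • rs) :=
    mem_orthoBox_add_smul e hw (by rwa [one_smul])
  refine ⟨orthoBox_mono e _ (fun i => mul_le_mul_of_nonneg_right hR₂R₃ (hrs i).le) hw, ?_⟩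
  have hx₀w₁ := abs_paraboloidDefect_add_le (x := x₁) (y := w₁) e hρ hx hw
    (paraboloidDefect_lift_neg 1 x₁ w) h₀
  rw [paraboloidDefect_neg_swap, abs_neg]
  calc |paraboloidDefect 1 w₁ x₀|
      = |paraboloidDefect 1 y₀ x₁ + paraboloidDefect 1 w₁ x₀ - paraboloidDefect 1 y₀ x₁| := by
        rw [add_sub_cancel_left]
    _ ≤ 2 * (n * (R * (R₂ + 1) * ρ)) + 2 * (n * (R * 1 * ρ)) := (abs_sub _ _).trans (by gcongr)
    _ = 2 * n * R * (R₂ + 2) * ρ := by ring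
    _ < R₃ * ρ := by gcongr

end Localization

section OffCenter

variable {V : Type*} [NormedAddCommGroup V] [InnerProductSpace ℝ V] {n : ℕ}

/-- The points of `G` over the box with centre `c` and half side lengths `r` whose `j`-th coordinate
differs from that of `c` by at least `η` times the half side length. The restriction keeps the slope
in direction `j` of the two-step paths from `c` away from zero. -/
def offCenterPart (G : Set (V × ℝ)) (e : OrthonormalBasis (Fin n) ℝ V) (c : V) (r : Fin n → ℝ)
    (η : ℝ) (j : Fin n) : Set (V × ℝ) :=
  {x | x ∈ G ∧ x.1 ∈ orthoBox e c r ∧ η * r j ≤ |⟪x.1 - c, e j⟫|}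

variable [FiniteDimensional ℝ V] [MeasurableSpace V] [BorelSpace V]
  (e : OrthonormalBasis (Fin n) ℝ V) (c : V) (j : Fin n)

lemma measurableSet_offCenterPart {G : Set (V × ℝ)} (hG : MeasurableSet G) (r : Fin n → ℝ)
    (η : ℝ) : MeasurableSet (offCenterPart G e c r η j) :=
  hG.inter <| (measurable_fst (measurableSet_orthoBox e c r)).inter <|
    measurable_fst (measurableSet_le measurable_const
      (by fun_prop : Measurable fun y : V => |⟪y - c, e j⟫|))

lemma volume_orthoBox_inter_slab_le {r : Fin n → ℝ} (hr : ∀ i, 0 < r i) {η : ℝ} (hη : 0 < η) :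
    volume (orthoBox e c r ∩ {x | |⟪x - c, e j⟫| < η * r j}) ≤
      ENNReal.ofReal (2 ^ n * (η * ∏ i, r i)) := by
  have hsub : orthoBox e c r ∩ {x | |⟪x - c, e j⟫| < η * r j} ⊆
      orthoBox e c (Function.update r j (η * r j)) := by
    intro x hx i
    obtain rfl | hij := eq_or_ne i j
    · simpa using hx.2
    · simpa [hij] using hx.1 i
  have hpos : ∀ i, 0 < Function.update r j (η * r j) i := by
    intro i
    obtain rfl | hij := eq_or_ne i j
    · simpa using mul_pos hη (hr i)
    · simpa [hij] using hr i
  have hprod : ∏ i, Function.update r j (η * r j) i = η * ∏ i, r i := by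
    rw [Finset.prod_update_of_mem (Finset.mem_univ j), mul_assoc, ← Finset.erase_eq,
      Finset.mul_prod_erase _ _ (Finset.mem_univ j)]
  refine (measure_mono hsub).trans_eq ?_
  rw [volume_orthoBox e c hpos, hprod, Fintype.card_fin]

lemma volume_paraboloidSection_inter_orthoBox_le (s : ℝ) (G : Set (V × ℝ)) (z : V × ℝ)
    {r : Fin n → ℝ} (hr : ∀ i, 0 < r i) {η : ℝ} (hη : 0 < η) :
    volume (paraboloidSection s G z ∩ orthoBox e c r) ≤
      volume (paraboloidSection s (offCenterPart G e c r η j) z) +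
        ENNReal.ofReal (2 ^ n * (η * ∏ i, r i)) := by
  have hsub : paraboloidSection s G z ∩ orthoBox e c r ⊆
      paraboloidSection s (offCenterPart G e c r η j) z ∪
        orthoBox e c r ∩ {x | |⟪x - c, e j⟫| < η * r j} := fun x hx =>
    (le_or_gt (η * r j) |⟪x - c, e j⟫|).imp (fun h => ⟨hx.1, hx.2, h⟩) (fun h => ⟨hx.2, h⟩)
  calc _ ≤ _ := (measure_mono hsub).trans (measure_union_le _ _)
    _ ≤ _ := by gcongr; exact volume_orthoBox_inter_slab_le e c j hr hη

variable {c} in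
lemma ofReal_half_mul_volume_le_setLIntegral_offCenterPart {X : Set V} {r r' : Fin n → ℝ} {ρ : ℝ}
    (hr : ∀ i, 0 < r i) (hr' : ∀ i, 0 < r' i) (hρ : ∀ i, r i * r' i = ρ) (hX : MeasurableSet X)
    (hXc : X ⊆ orthoBox e c r) (z : V × ℝ) {R η : ℝ} (hR : 0 < R) (hη : 0 < η) {s : ℝ}
    (hs : |s| = 1) {G : Set (V × ℝ)} (hG : MeasurableSet G) {g v t : ℝ} (ht₀ : 0 ≤ t)
    (hGg : volume G ≤ ENNReal.ofReal g) (hXv : ENNReal.ofReal v ≤ volume X)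
    (ht : ∀ y ∈ X, ENNReal.ofReal t ≤ volume (paraboloidSection (-s) G (paraboloidLift s z y)))
    (htail : n * (2 ^ n * ∏ i, r i) / (4 * R * ρ) * g ≤ t / 4 * v)
    (hcenter : 2 ^ n * (η * ∏ i, (R • r') i) ≤ t / 4) :
    ENNReal.ofReal (t / 2) * volume X ≤
      ∫⁻ y in X, volume (paraboloidSection (-s)
        (offCenterPart G e z.1 (R • r') η j) (paraboloidLift s z y)) := by
  set O := offCenterPart G e z.1 (R • r') η j
  have hfar : ENNReal.ofReal (n * (2 ^ n * ∏ i, r i) / (4 * R * ρ)) * volume G ≤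
      ENNReal.ofReal (t / 4) * volume X := by
    have hρ₀ : 0 < ρ := hρ j ▸ mul_pos (hr j) (hr' j)
    have := Finset.prod_pos fun i (_ : i ∈ Finset.univ) => hr i
    calc _ ≤ ENNReal.ofReal (n * (2 ^ n * ∏ i, r i) / (4 * R * ρ)) * ENNReal.ofReal g := by gcongr
      _ ≤ ENNReal.ofReal (t / 4) * ENNReal.ofReal v := by
        rw [← ENNReal.ofReal_mul (by positivity), ← ENNReal.ofReal_mul (by positivity)]
        exact ENNReal.ofReal_le_ofReal htail
      _ ≤ _ := by gcongr
  have hRr' : ∀ i, 0 < (R • r') i := fun i => mul_pos hR (hr' i)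
  have hXfin : volume X ≠ ∞ :=
    ne_top_of_le_ne_top (by rw [volume_orthoBox e c hr]; exact ofReal_ne_top) (measure_mono hXc)
  have htwo : ENNReal.ofReal (t / 2) * volume X + ENNReal.ofReal (t / 2) * volume X ≤
      (∫⁻ y in X, volume (paraboloidSection (-s) O (paraboloidLift s z y))) +
        ENNReal.ofReal (t / 2) * volume X := by
    calc _ = ENNReal.ofReal t * volume X := by
          rw [← add_mul, ← ENNReal.ofReal_add (by positivity) (by positivity), add_halves]
      _ ≤ (∫⁻ y in X, volume (paraboloidSection (-s) G (paraboloidLift s z y) ∩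
            orthoBox e z.1 (R • r'))) + ENNReal.ofReal (t / 4) * volume X :=
          (ofReal_mul_volume_le_setLIntegral_twoStep_inter_orthoBox e c hr hr' hρ hX hXc z hR hs
            hG ht).trans (by gcongr)
      _ ≤ (∫⁻ y in X, volume (paraboloidSection (-s) O (paraboloidLift s z y)) +
            ENNReal.ofReal (t / 4)) + ENNReal.ofReal (t / 4) * volume X := by
          gcongr with y
          exact (volume_paraboloidSection_inter_orthoBox_le e z.1 j _ _ _
            hRr' hη).trans (by gcongr)
      _ = _ := by
          rw [lintegral_add_right _ measurable_const, setLIntegral_const, add_assoc, ← add_mul,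
            ← ENNReal.ofReal_add (by positivity) (by positivity)]
          ring_nf
  exact (ENNReal.add_le_add_iff_right (ENNReal.mul_ne_top ofReal_ne_top hXfin)).1 htwo

end OffCenter

section RichFanLocalization

variable {V : Type*} [NormedAddCommGroup V] [InnerProductSpace ℝ V] [FiniteDimensional ℝ V]
  [MeasurableSpace V] [BorelSpace V] {n : ℕ} {E F : Set (V × ℝ)} {α β ρ : ℝ}
  {e : OrthonormalBasis (Fin n) ℝ V} {x₀ y₀ : V × ℝ} {r rs : Fin n → ℝ} {A : Set V}

lemma setLIntegral_volume_paraboloidSection_inter_paraboloidBox_le (hr : ∀ j, 0 < r j)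
    (hrs : ∀ j, 0 < rs j) (hρ : ∀ j, r j * rs j = ρ) (h₀ : paraboloidDefect 1 y₀ x₀ = 0)
    (hE : MeasurableSet E) (hF : MeasurableSet F) {b R R₂ R₃ t δ : ℝ} (hR : 1 ≤ R)
    (hR₂ : 0 < R₂) (hR₃ : 2 * n * R * (R₂ + 2) < R₃) (hFb : volume F ≤ ENNReal.ofReal b)
    (hEt : ∀ x ∈ E, ENNReal.ofReal t ≤ volume (paraboloidSection (-1) F x)) {j : Fin n}
    (htail : n * (2 ^ n * ∏ i, (R • r) i) / (4 * R₂ * (R * ρ)) * b ≤ δ) {y : V}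
    (hy : y ∈ orthoBox e y₀.1 rs)
    (hEy : paraboloidSection 1 E (paraboloidLift (-1) x₀ y) ⊆ orthoBox e x₀.1 (R • r)) :
    ENNReal.ofReal t * volume (paraboloidSection 1 E (paraboloidLift (-1) x₀ y)) ≤
      (∫⁻ x in paraboloidSection 1 E (paraboloidLift (-1) x₀ y), volume (paraboloidSection (-1)
        (F ∩ paraboloidBox (-1) e y₀.1 x₀ (R₃ • rs) (R₃ * ρ))
        (paraboloidLift 1 (paraboloidLift (-1) x₀ y) x))) + ENNReal.ofReal δ := by
  set y₁ := paraboloidLift (-1) x₀ y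
  have hRr : ∀ i, 0 < (R • r) i := fun i => mul_pos (by linarith) (hr i)
  have hρR : ∀ i, (R • r) i * rs i = R * ρ := fun i => by
    rw [← hρ i, Pi.smul_apply, smul_eq_mul, mul_assoc]
  have hX := measurableSet_paraboloidSection 1 hE y₁
  refine (ofReal_mul_volume_le_setLIntegral_twoStep_inter_orthoBox e x₀.1 hRr hrs hρR hX hEy y₁ hR₂
    abs_one hF fun x hx => hEt _ hx).trans (add_le_add (setLIntegral_mono' hX fun x hx => ?_) ?_)
  · refine measure_mono fun w hw => ⟨hw.1, ?_⟩
    exact (twoStep_mem_paraboloidBox e hr hrs hρ h₀ hR hR₂ hR₃ j hy (hEy hx)).2 w hw.2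
  · have hρ₀ : 0 < ρ := hρ j ▸ mul_pos (hr j) (hrs j)
    have := Finset.prod_pos fun i (_ : i ∈ Finset.univ) => hRr i
    calc _ ≤ ENNReal.ofReal (n * (2 ^ n * ∏ i, (R • r) i) / (4 * R₂ * (R * ρ))) *
          ENNReal.ofReal b := by gcongr
      _ ≤ ENNReal.ofReal δ := by
        rw [← ENNReal.ofReal_mul (by positivity)]
        exact ENNReal.ofReal_le_ofReal htail

lemma setLIntegral_twoStep_le_incidence (hrs : ∀ j, 0 < rs j) (hE : MeasurableSet E)
    (hF : MeasurableSet F) (hAm : MeasurableSet A)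
    (hA : A ⊆ orthoBox e y₀.1 rs) {G : Set (V × ℝ)} (hG : MeasurableSet G)
    {j : Fin n} {t : ℝ} (ht : 0 < t)
    (hGE : ∀ y ∈ A, ∀ x ∈ paraboloidSection 1 G (paraboloidLift (-1) x₀ y),
      t ≤ |⟪x - x₀.1, e j⟫| ∧ paraboloidLift 1 (paraboloidLift (-1) x₀ y) x ∈ E) :
    ∫⁻ y in A, ∫⁻ x in paraboloidSection 1 G (paraboloidLift (-1) x₀ y),
        volume (paraboloidSection (-1) F (paraboloidLift 1 (paraboloidLift (-1) x₀ y) x)) ≤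
      ENNReal.ofReal (2 ^ n * (∏ i, rs i) / (4 * rs j * t)) * incidence (-1) E F := by
  let H : V × ℝ → ℝ≥0∞ := E.indicator fun x => volume (paraboloidSection (-1) F x)
  have hH : Measurable H := (measurable_volume_paraboloidSection (-1) hF).indicator hE
  have hslab := setLIntegral_twoStep_slab_le e y₀.1 hrs j x₀ ht (s := -1) (by simp) hH
  rw [neg_neg, lintegral_indicator hE] at hslab
  refine (setLIntegral_mono' hAm fun y hy => ?_).trans ((lintegral_mono_set hA).trans hslab)
  refine (setLIntegral_mono' (measurableSet_paraboloidSection 1 hG _) fun x hx => ?_).trans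
    (lintegral_mono_set fun x hx => (hGE y hy x hx).1)
  exact (Set.indicator_of_mem (hGE y hy x hx).2 fun x => volume (paraboloidSection (-1) F x)).ge

lemma IsRichFan.ofReal_mul_volume_le_offCenterPart (hfan : IsRichFan E F α β e x₀ y₀ rs A)
    (hr : ∀ j, 0 < r j) (hρ : ∀ j, r j * rs j = ρ) (hE : MeasurableSet E) (hF : MeasurableSet F)
    (hβ : 0 < β) {a : ℝ} (hEa : volume E ≤ ENNReal.ofReal a) {R η : ℝ} (hR : 0 < R) (hη : 0 < η)
    (j : Fin n) (htail : n * (2 ^ n * ∏ i, rs i) / (4 * R * ρ) * a ≤ β / 16 * (α / 32))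
    (hcenter : 2 ^ n * (η * ∏ i, (R • r) i) ≤ β / 16) :
    ENNReal.ofReal (β / 8) * volume A ≤ ∫⁻ y in A, volume (paraboloidSection 1
      (offCenterPart (richPart (-1) (α / 2) E F) e x₀.1 (R • r) η j)
      (paraboloidLift (-1) x₀ y)) := by
  have := ofReal_half_mul_volume_le_setLIntegral_offCenterPart e j hfan.side_pos hr
    (fun i => by rw [mul_comm, hρ i]) hfan.measurableSet hfan.subset_orthoBox x₀
    hR hη (s := -1) (by simp) (measurableSet_richPart _ _ hE hF) (t := β / 4) (by positivity)
    ((measure_mono (richPart_subset _ _ _ _)).trans hEa) hfan.le_volume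
    (by simpa only [neg_neg] using hfan.rich) (htail.trans_eq (by ring))
    (hcenter.trans_eq (by ring))
  rwa [neg_neg, show β / 4 / 2 = β / 8 by ring] at this

lemma IsRichFan.ofReal_mul_volume_le_twoStep (hfan : IsRichFan E F α β e x₀ y₀ rs A)
    (hr : ∀ j, 0 < r j) (hρ : ∀ j, r j * rs j = ρ) (hE : MeasurableSet E) (hF : MeasurableSet F)
    {a b : ℝ} (hα : 0 < α) (hβ : 0 < β) (hEa : volume E ≤ ENNReal.ofReal a)
    (hFb : volume F ≤ ENNReal.ofReal b) {R R₂ R₃ η : ℝ} (hR : 1 ≤ R) (hR₂ : 0 < R₂)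
    (hR₃ : 2 * n * R * (R₂ + 2) < R₃) (hη : 0 < η) (j : Fin n)
    (htail : n * (2 ^ n * ∏ i, rs i) / (4 * R * ρ) * a ≤ β / 16 * (α / 32))
    (hcenter : 2 ^ n * (η * ∏ i, (R • r) i) ≤ β / 16)
    (htail₂ : n * (2 ^ n * ∏ i, (R • r) i) / (4 * R₂ * (R * ρ)) * b ≤ α * β / 32) :
    ENNReal.ofReal (α * β / 32) * volume A ≤
      ∫⁻ y in A, ∫⁻ x in paraboloidSection 1 (offCenterPart (richPart (-1) (α / 2) E F) e x₀.1
        (R • r) η j) (paraboloidLift (-1) x₀ y), volume (paraboloidSection (-1)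
          (F ∩ paraboloidBox (-1) e y₀.1 x₀ (R₃ • rs) (R₃ * ρ))
          (paraboloidLift 1 (paraboloidLift (-1) x₀ y) x)) := by
  set E₂ := offCenterPart (richPart (-1) (α / 2) E F) e x₀.1 (R • r) η j
  have hE₂ : MeasurableSet E₂ :=
    measurableSet_offCenterPart e _ j (measurableSet_richPart _ _ hE hF) _ _
  have hAfin : volume A ≠ ∞ := by
    refine ne_top_of_le_ne_top ?_ (measure_mono hfan.subset_orthoBox)
    rw [volume_orthoBox e _ hfan.side_pos]
    exact ofReal_ne_top
  refine (ENNReal.add_le_add_iff_right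
    (ENNReal.mul_ne_top (ofReal_ne_top (r := α * β / 32)) hAfin)).1 ?_
  calc ENNReal.ofReal (α * β / 32) * volume A + ENNReal.ofReal (α * β / 32) * volume A
      = ENNReal.ofReal (α / 2) * (ENNReal.ofReal (β / 8) * volume A) := by
        rw [← add_mul, ← mul_assoc, ← ENNReal.ofReal_add (by positivity) (by positivity),
          ← ENNReal.ofReal_mul (by positivity)]
        ring_nf
    _ ≤ ENNReal.ofReal (α / 2) * ∫⁻ y in A,
          volume (paraboloidSection 1 E₂ (paraboloidLift (-1) x₀ y)) := by
        gcongr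
        exact hfan.ofReal_mul_volume_le_offCenterPart hr hρ hE hF hβ hEa (by linarith) hη j htail
          hcenter
    _ ≤ _ := by
        rw [← lintegral_const_mul' _ _ ofReal_ne_top, ← setLIntegral_const,
          ← lintegral_add_right _ measurable_const]
        exact setLIntegral_mono' hfan.measurableSet fun y hy =>
          setLIntegral_volume_paraboloidSection_inter_paraboloidBox_le hr hfan.side_pos hρ
            hfan.incident hE₂ hF hR hR₂ hR₃ hFb (fun x hx => hx.1.2) (j := j) htail₂
            (hfan.subset_orthoBox hy) fun x hx => hx.2.1

-- Bounds below the paths `x₀ → y → x → w` with `y ∈ A` and `x` off-centre: they stay in the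
-- paraboloid boxes, and each incident pair `(x, w)` is reached from a thin slab of `y` only.
lemma IsRichFan.le_incidence_paraboloidBox (hfan : IsRichFan E F α β e x₀ y₀ rs A)
    (hr : ∀ j, 0 < r j) (hρ : ∀ j, r j * rs j = ρ) (hE : MeasurableSet E) (hF : MeasurableSet F)
    {a b : ℝ} (hα : 0 < α) (hβ : 0 < β) (hEa : volume E ≤ ENNReal.ofReal a)
    (hFb : volume F ≤ ENNReal.ofReal b) {R R₂ R₃ η : ℝ} (hR : 1 ≤ R) (hR₂ : 0 < R₂)
    (hR₃ : 2 * n * R * (R₂ + 2) < R₃) (hη : 0 < η) (j : Fin n)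
    (htail : n * (2 ^ n * ∏ i, rs i) / (4 * R * ρ) * a ≤ β / 16 * (α / 32))
    (hcenter : 2 ^ n * (η * ∏ i, (R • r) i) ≤ β / 16)
    (htail₂ : n * (2 ^ n * ∏ i, (R • r) i) / (4 * R₂ * (R * ρ)) * b ≤ α * β / 32) :
    ENNReal.ofReal (α ^ 2 * β * (η * R * ρ) / (2 ^ (n + 8) * ∏ i, rs i)) ≤
      incidence (-1) (E ∩ paraboloidBox 1 e x₀.1 y₀ (R₃ • r) (R₃ * ρ))
        (F ∩ paraboloidBox (-1) e y₀.1 x₀ (R₃ • rs) (R₃ * ρ)) := by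
  set E' := E ∩ paraboloidBox 1 e x₀.1 y₀ (R₃ • r) (R₃ * ρ)
  set F' := F ∩ paraboloidBox (-1) e y₀.1 x₀ (R₃ • rs) (R₃ * ρ)
  have hE' : MeasurableSet E' := hE.inter (measurableSet_paraboloidBox _ _ _ _ _ _)
  have hF' : MeasurableSet F' := hF.inter (measurableSet_paraboloidBox _ _ _ _ _ _)
  have hR₀ : 0 < R := by linarith
  have hηj : 0 < η * (R • r) j := mul_pos hη (mul_pos hR₀ (hr j))
  have hrs_pos := Finset.prod_pos fun i (_ : i ∈ Finset.univ) => hfan.side_pos i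
  have hslab : 4 * rs j * (η * (R • r) j) = 4 * η * R * ρ := by
    rw [← hρ j, Pi.smul_apply, smul_eq_mul]; ring
  have hρ₀ : 0 < ρ := hρ j ▸ mul_pos (hr j) (hfan.side_pos j)
  have hpaths : ENNReal.ofReal (α * β / 32 * (α / 32)) ≤
      ENNReal.ofReal (2 ^ n * (∏ i, rs i) / (4 * η * R * ρ)) * incidence (-1) E' F' := by
    rw [ENNReal.ofReal_mul (by positivity), ← hslab]
    calc _ ≤ ENNReal.ofReal (α * β / 32) * volume A := by gcongr; exact hfan.le_volume
      _ ≤ _ := hfan.ofReal_mul_volume_le_twoStep hr hρ hE hF hα hβ hEa hFb hR hR₂ hR₃ hη j htail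
          hcenter htail₂
      _ ≤ _ := setLIntegral_twoStep_le_incidence hfan.side_pos hE' hF' hfan.measurableSet
          hfan.subset_orthoBox (measurableSet_offCenterPart e _ j
            (measurableSet_richPart _ _ hE hF) _ _) hηj fun y hy x hx => ⟨hx.2.2, hx.1.1,
              (twoStep_mem_paraboloidBox e hr hfan.side_pos hρ hfan.incident hR hR₂ hR₃ j
                (hfan.subset_orthoBox hy) hx.2.1).1⟩
  refine le_of_eq_of_le ?_ (ENNReal.div_le_of_le_mul' hpaths)
  rw [← ENNReal.ofReal_div_of_pos (by positivity)]
  congr 1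
  field_simp
  ring

end RichFanLocalization

section Cell

variable {V : Type*} [NormedAddCommGroup V] [InnerProductSpace ℝ V] {n : ℕ}
  {e : OrthonormalBasis (Fin n) ℝ V} {G : Set (V × ℝ)} {s θ ρ : ℝ} {z : V × ℝ} {r r' : Fin n → ℝ}

/-- Any two points of `G` differ by less than `r j` in the `j`-th coordinate, and by less than `t`
in height above the paraboloid with vertex `z` and opening `s`. The role of a cell is that it fits
into a single paraboloid box centred at any of its points. -/
def IsCell (s : ℝ) (e : OrthonormalBasis (Fin n) ℝ V) (z : V × ℝ) (r : Fin n → ℝ) (t : ℝ)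
    (G : Set (V × ℝ)) : Prop :=
  ∀ x ∈ G, ∀ x' ∈ G,
    x.1 ∈ orthoBox e x'.1 r ∧ |paraboloidDefect s z x - paraboloidDefect s z x'| < t

-- By the four-point identity, replacing the vertex `z` by `w` changes the differences of heights by
-- at most `2 * ⟪x - x', w - z⟫`.
lemma IsCell.subset_paraboloidBox (hG : IsCell s e z (θ • r) (θ * ρ) G) (hs : |s| = 1)
    (hρ : ∀ j, r j * r' j = ρ) {R : ℝ} {x' w : V × ℝ} (hx' : x' ∈ G)
    (hw : w.1 ∈ orthoBox e z.1 (R • r')) (hwx' : paraboloidDefect s w x' = 0) {r'' : Fin n → ℝ}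
    (hr'' : θ • r ≤ r'') {t : ℝ} (ht : θ * ρ + 2 * (n * (θ * R * ρ)) ≤ t) :
    G ⊆ paraboloidBox s e x'.1 w r'' t := by
  intro x hx
  obtain ⟨hxx', hheight⟩ := hG x hx x' hx'
  refine ⟨orthoBox_mono e _ hr'' hxx', ?_⟩
  have hfour := paraboloidDefect_four_point s x x' w z
  have hchange : |2 * s * ⟪x.1 - x'.1, w.1 - z.1⟫| ≤ 2 * (n * (θ * R * ρ)) := by
    rw [abs_mul, abs_mul, abs_two, hs, mul_one]
    gcongr
    exact abs_inner_le_of_mem_orthoBox e hρ hxx' hw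
  calc |paraboloidDefect s w x|
      = |(paraboloidDefect s z x - paraboloidDefect s z x') +
          2 * s * ⟪x.1 - x'.1, w.1 - z.1⟫| := by
        rw [← hfour, hwx']
        ring_nf
    _ < θ * ρ + 2 * (n * (θ * R * ρ)) := (abs_add_le _ _).trans_lt (by linarith)
    _ ≤ t := ht

variable [MeasurableSpace V] [BorelSpace V]

lemma exists_isCell_le_setLIntegral [SecondCountableTopology V] {ν : Measure (V × ℝ)}
    (hG : MeasurableSet G) (hr : ∀ j, 0 < r j) (hρ : 0 < ρ) (hθ : 0 < θ) {R : ℝ} {c : V}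
    (hGc : G ⊆ paraboloidBox s e c z (R • r) (R * ρ)) {N : ℕ} (hN : R / θ ≤ N)
    {f : V × ℝ → ℝ≥0∞} {l : ℝ} (hl : 0 < l) (h : ENNReal.ofReal l ≤ ∫⁻ x in G, f x ∂ν) :
    ∃ G' ⊆ G, MeasurableSet G' ∧ IsCell s e z (θ • r) (θ * ρ) G' ∧
      ENNReal.ofReal (l / (2 * N + 1) ^ (n + 1)) ≤ ∫⁻ x in G', f x ∂ν := by
  let g : Option (Fin n) → V × ℝ → ℝ := fun o x =>
    o.elim (paraboloidDefect s z x / (θ * ρ)) fun j => ⟪x.1 - c, e j⟫ / (θ * r j)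
  have hg : ∀ o, Measurable (g o) := by
    rintro (_ | j)
    · exact (measurable_paraboloidDefect s z).div_const _
    · exact (by fun_prop : Measurable fun x : V × ℝ => ⟪x.1 - c, e j⟫).div_const _
  have hdiv : ∀ a w, 0 < w → |a| < R * w → |a / (θ * w)| ≤ N := by
    intro a w hw ha
    rw [abs_div, abs_of_pos (mul_pos hθ hw)]
    refine le_trans ?_ hN
    rw [div_le_div_iff₀ (mul_pos hθ hw) hθ]
    nlinarith
  have hbound : ∀ x ∈ G, ∀ o, |g o x| ≤ N := by
    rintro x hx (_ | j)
    · exact hdiv _ _ hρ (hGc hx).2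
    · exact hdiv _ _ (hr j) ((hGc hx).1 j)
  have hclose : ∀ {a b w : ℝ}, 0 < w → ⌊a / w⌋ = ⌊b / w⌋ → |a - b| < w := by
    intro a b w hw hab
    have := Int.abs_sub_lt_one_of_floor_eq_floor hab
    rwa [← sub_div, abs_div, abs_of_pos hw, div_lt_one hw] at this
  obtain ⟨u, hu⟩ := exists_floor_cell_le_setLIntegral hbound hl h
  rw [Fintype.card_option, Fintype.card_fin] at hu
  refine ⟨_, Set.inter_subset_left, hG.inter ?_, fun x hx x' hx' => ?_, hu⟩
  · rw [Set.ofPred_forall]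
    exact .iInter fun o => (hg o).floor (measurableSet_singleton (u o))
  · have hfloor : ∀ o, ⌊g o x⌋ = ⌊g o x'⌋ := fun o => (hx.2 o).trans (hx'.2 o).symm
    refine ⟨fun j => ?_, hclose (mul_pos hθ hρ) (hfloor none)⟩
    have := hclose (mul_pos hθ (hr j)) (hfloor (some j))
    rwa [← inner_sub_left, sub_sub_sub_cancel_right] at this

variable [FiniteDimensional ℝ V]

lemma IsCell.volume_paraboloidSection_le {t : ℝ} (hG : IsCell s e z r t G) (hr : ∀ j, 0 < r j)
    (s' : ℝ) (z' : V × ℝ) :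
    volume (paraboloidSection s' G z') ≤ ENNReal.ofReal (2 ^ n * ∏ j, r j) := by
  obtain hempty | ⟨w, hw⟩ := (paraboloidSection s' G z').eq_empty_or_nonempty
  · simp [hempty]
  · have hsub : paraboloidSection s' G z' ⊆ orthoBox e w r := fun x hx => (hG _ hx _ hw).1
    exact (measure_mono hsub).trans_eq (by rw [volume_orthoBox e _ hr, Fintype.card_fin])

lemma ofReal_div_le_volume_of_le_incidence {E F : Set (V × ℝ)} {l v : ℝ} (hv : 0 < v)
    (hsec : ∀ x, volume (paraboloidSection s F x) ≤ ENNReal.ofReal v)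
    (h : ENNReal.ofReal l ≤ incidence s E F) : ENNReal.ofReal (l / v) ≤ volume E := by
  rw [ENNReal.ofReal_div_of_pos hv]
  refine ENNReal.div_le_of_le_mul' (h.trans ?_)
  rw [← setLIntegral_const]
  exact lintegral_mono hsec

lemma exists_mem_paraboloidDefect_eq_zero {E F : Set (V × ℝ)} (h : 0 < incidence (-s) E F) :
    ∃ x ∈ E, ∃ y ∈ F, paraboloidDefect s y x = 0 := by
  by_contra! hne
  have hempty : ∀ x ∈ E, paraboloidSection (-s) F x = ∅ := fun x hx =>
    Set.eq_empty_of_forall_notMem fun w hw => hne x hx _ hw (paraboloidDefect_lift_neg s x w)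
  refine h.not_ge ((setLIntegral_mono (g := 0) measurable_zero fun x hx => ?_).trans_eq ?_)
  · rw [hempty x hx, measure_empty, Pi.zero_apply]
  · exact lintegral_zero_fun

lemma exists_isCell_le_incidence {E F : Set (V × ℝ)} (hE : MeasurableSet E) (hF : MeasurableSet F)
    (hr : ∀ j, 0 < r j) (hr' : ∀ j, 0 < r' j) (hρ : 0 < ρ) (hθ : 0 < θ) {R : ℝ} {x₀ y₀ : V × ℝ}
    (hEc : E ⊆ paraboloidBox 1 e x₀.1 y₀ (R • r) (R * ρ))
    (hFc : F ⊆ paraboloidBox (-1) e y₀.1 x₀ (R • r') (R * ρ)) {N : ℕ} (hN : R / θ ≤ N) {l : ℝ}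
    (hl : 0 < l) (h : ENNReal.ofReal l ≤ incidence (-1) E F) :
    ∃ E' ⊆ E, ∃ F' ⊆ F, IsCell 1 e y₀ (θ • r) (θ * ρ) E' ∧
      IsCell (-1) e x₀ (θ • r') (θ * ρ) F' ∧ MeasurableSet E' ∧ MeasurableSet F' ∧
      ENNReal.ofReal (l / ((2 * N + 1) ^ (n + 1)) ^ 2) ≤ incidence (-1) E' F' := by
  obtain ⟨E', hE'E, hE', hcell, h'⟩ := exists_isCell_le_setLIntegral hE hr hρ hθ hEc hN hl h
  rw [← incidence, incidence_comm _ hE' hF] at h'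
  obtain ⟨F', hF'F, hF', hcell', h''⟩ :=
    exists_isCell_le_setLIntegral hF hr' hρ hθ hFc hN (by positivity) h'
  rw [← incidence, ← incidence_comm _ hE' hF', div_div, ← sq] at h''
  exact ⟨E', hE'E, F', hF'F, hcell, hcell', hE', hF', h''⟩

lemma exists_paraboloidBox_le_volume_inter_of_le_incidence {E F : Set (V × ℝ)}
    (hE : MeasurableSet E) (hF : MeasurableSet F) (hr : ∀ j, 0 < r j) (hr' : ∀ j, 0 < r' j)
    (hρ : 0 < ρ) (hrr' : ∀ j, r j * r' j = ρ) (hθ : 0 < θ) {R κ : ℝ}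
    (hκ : θ * (1 + 2 * n * R) ≤ κ ^ 2) (hθκ : θ ≤ κ) {x₀ y₀ : V × ℝ} {N : ℕ} (hN : R / θ ≤ N)
    {l : ℝ} (hl : 0 < l)
    (h : ENNReal.ofReal l ≤ incidence (-1) (E ∩ paraboloidBox 1 e x₀.1 y₀ (R • r) (R * ρ))
      (F ∩ paraboloidBox (-1) e y₀.1 x₀ (R • r') (R * ρ))) :
    ∃ x y : V × ℝ, paraboloidDefect 1 y x = 0 ∧
      ENNReal.ofReal (l / ((2 * N + 1) ^ (n + 1)) ^ 2 / (2 ^ n * ∏ j, (θ • r') j)) ≤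
        volume (E ∩ paraboloidBox 1 e x.1 y (κ • r) (κ ^ 2 * ρ)) ∧
      ENNReal.ofReal (l / ((2 * N + 1) ^ (n + 1)) ^ 2 / (2 ^ n * ∏ j, (θ • r) j)) ≤
        volume (F ∩ paraboloidBox (-1) e y.1 x (κ • r') (κ ^ 2 * ρ)) := by
  have hEbox := hE.inter (measurableSet_paraboloidBox e x₀.1 (R • r) 1 y₀ (R * ρ))
  have hFbox := hF.inter (measurableSet_paraboloidBox e y₀.1 (R • r') (-1) x₀ (R * ρ))
  obtain ⟨E', hE'E, F', hF'F, hcell, hcell', hE', hF', h'⟩ := exists_isCell_le_incidence hEbox hFbox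
    hr hr' hρ hθ Set.inter_subset_right Set.inter_subset_right hN hl h
  obtain ⟨x, hx, y, hy, hxy⟩ := exists_mem_paraboloidDefect_eq_zero (s := 1)
    ((ENNReal.ofReal_pos.2 (by positivity)).trans_le h')
  have hθr : ∀ j, 0 < (θ • r) j := fun j => mul_pos hθ (hr j)
  have hθr' : ∀ j, 0 < (θ • r') j := fun j => mul_pos hθ (hr' j)
  have hheight : θ * ρ + 2 * (n * (θ * R * ρ)) ≤ κ ^ 2 * ρ := by nlinarith
  have hEsub : E' ⊆ paraboloidBox 1 e x.1 y (κ • r) (κ ^ 2 * ρ) :=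
    hcell.subset_paraboloidBox abs_one hrr' hx (hF'F hy).2.1 hxy
      (fun j => mul_le_mul_of_nonneg_right hθκ (hr j).le) hheight
  have hFsub : F' ⊆ paraboloidBox (-1) e y.1 x (κ • r') (κ ^ 2 * ρ) :=
    hcell'.subset_paraboloidBox (by simp) (fun j => by rw [mul_comm, hrr' j]) hy (hE'E hx).2.1
      (by rw [paraboloidDefect_neg_swap, hxy, neg_zero])
      (fun j => mul_le_mul_of_nonneg_right hθκ (hr' j).le) hheight
  have hprod := Finset.prod_pos fun i (_ : i ∈ Finset.univ) => hθr i
  have hprod' := Finset.prod_pos fun i (_ : i ∈ Finset.univ) => hθr' i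
  refine ⟨x, y, hxy, ?_, ?_⟩
  · exact (ofReal_div_le_volume_of_le_incidence (by positivity)
      (hcell'.volume_paraboloidSection_le hθr' _) h').trans
      (measure_mono fun p hp => ⟨(hE'E hp).1, hEsub hp⟩)
  · rw [incidence_comm _ hE' hF'] at h'
    exact (ofReal_div_le_volume_of_le_incidence (by positivity)
      (hcell.volume_paraboloidSection_le hθr _) h').trans
      (measure_mono fun p hp => ⟨(hF'F hp).1, hFsub hp⟩)

end Cell

section RefinedBound

variable {V : Type*} [NormedAddCommGroup V] [InnerProductSpace ℝ V] [FiniteDimensional ℝ V]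
  [MeasurableSpace V] [BorelSpace V] {n : ℕ} {E F : Set (V × ℝ)} {a b ρ ε : ℝ}

/-- The threshold above which the large parameter `T` absorbs all dimensional constants. -/
def absorbConst (n : ℕ) : ℝ := 2 ^ (2 * n + 10) * (64 * n) ^ n

/-- `T ^ localizationExponent n` bounds the dilation of the boxes to which the incidences
localize. -/
def localizationExponent (n : ℕ) : ℕ := n * (n + 3) + n + 7

/-- `T ^ densityExponent n` bounds the loss in the density of each set on the final box. -/
def densityExponent (n : ℕ) : ℕ :=
  localizationExponent n + 2 * (n + 1) * (2 * localizationExponent n + 6)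

lemma natCast_mul_two_pow_le_absorbConst (hn : 0 < n) {m : ℕ} (hm : m ≤ 2 * n + 16) :
    n * 2 ^ m ≤ absorbConst n := by
  have hn₁ : (1 : ℝ) ≤ n := Nat.one_le_cast.2 hn
  calc (n : ℝ) * 2 ^ m ≤ n * 2 ^ (2 * n + 16) := by gcongr; exact one_le_two
    _ = 2 ^ (2 * n + 10) * (64 * n) := by ring
    _ ≤ absorbConst n := by
      unfold absorbConst
      gcongr
      exact le_self_pow₀ (by linarith) hn.ne'

lemma two_pow_le_absorbConst (hn : 0 < n) {m : ℕ} (hm : m ≤ 2 * n + 16) :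
    2 ^ m ≤ absorbConst n :=
  (le_mul_of_one_le_left (by positivity) (Nat.one_le_cast.2 hn)).trans
    (natCast_mul_two_pow_le_absorbConst hn hm)

lemma one_le_absorbConst (hn : 0 < n) : 1 ≤ absorbConst n :=
  (pow_zero (2 : ℝ)).symm.trans_le (two_pow_le_absorbConst hn (Nat.zero_le _))

lemma IsRichFan.le_prod_side {α β : ℝ} {e : OrthonormalBasis (Fin n) ℝ V} {x₀ y₀ : V × ℝ}
    {rs : Fin n → ℝ} {A : Set V} (hfan : IsRichFan E F α β e x₀ y₀ rs A) :
    α ≤ 2 ^ (n + 5) * ∏ j, rs j := by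
  have h := hfan.le_volume.trans (measure_mono hfan.subset_orthoBox)
  have hpos := Finset.prod_pos fun j (_ : j ∈ Finset.univ) => hfan.side_pos j
  rw [volume_orthoBox e _ hfan.side_pos, Fintype.card_fin,
    ENNReal.ofReal_le_ofReal_iff (by positivity)] at h
  rw [pow_add]
  linarith

lemma exists_isRichFan_prod_side_le (hn : 0 < n) (hdim : Module.finrank ℝ V = n)
    (hE : MeasurableSet E) (hF : MeasurableSet F) (ha : 0 < a) (hb : 0 < b) (hρ : 0 < ρ)
    (hε : 0 < ε) (hab : ρ ^ (n + 2) = a * b) (hEa : volume E ≤ ENNReal.ofReal a)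
    (hFb : volume F ≤ ENNReal.ofReal b)
    (h : ENNReal.ofReal (ε * ρ ^ (n + 1)) ≤ incidence (-1) E F) :
    ∃ (e : OrthonormalBasis (Fin n) ℝ V) (x₀ y₀ : V × ℝ) (rs : Fin n → ℝ) (A : Set V),
      IsRichFan E F (b * ε / ρ) (a * ε / ρ) e x₀ y₀ rs A ∧
      (∏ j, rs j) * ε ^ (n + 2) ≤ 32 * (64 * n) ^ n * (b * ε / ρ) := by
  have hα : 0 < b * ε / ρ := by positivity
  have hΛ : a * (b * ε / ρ) = ε * ρ ^ (n + 1) := by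
    field_simp
    linear_combination (-1 : ℝ) * hab
  rw [← hΛ] at h
  obtain ⟨e, x₀, y₀, rs, A, hfan, hprod⟩ := exists_isRichFan hn hdim hE hF ha hb hα
    (β := a * ε / ρ) (by positivity) (by ring) hEa hFb h
  refine ⟨e, x₀, y₀, rs, A, hfan, le_of_mul_le_mul_right (a := b ^ n) ?_ (by positivity)⟩
  have hαβ : (b * ε / ρ) ^ n * (a * ε / ρ) * (b * ε / ρ) = b ^ n * ε ^ (n + 2) := by
    rw [div_pow]
    field_simp
    rw [← pow_add, hab]
    ring
  calc (∏ j, rs j) * ε ^ (n + 2) * b ^ n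
      = (∏ j, rs j) * (b * ε / ρ) ^ n * (a * ε / ρ) * (b * ε / ρ) := by
        linear_combination (-∏ j, rs j) * hαβ
    _ ≤ 32 * (64 * n) ^ n * b ^ n * (b * ε / ρ) := by gcongr
    _ = 32 * (64 * n) ^ n * (b * ε / ρ) * b ^ n := by ring

lemma le_absorbConst_of_le_incidence (hn : 0 < n) (hdim : Module.finrank ℝ V = n)
    (hE : MeasurableSet E) (hF : MeasurableSet F) (ha : 0 < a) (hb : 0 < b) (hρ : 0 < ρ)
    (hε : 0 < ε) (hab : ρ ^ (n + 2) = a * b) (hEa : volume E ≤ ENNReal.ofReal a)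
    (hFb : volume F ≤ ENNReal.ofReal b)
    (h : ENNReal.ofReal (ε * ρ ^ (n + 1)) ≤ incidence (-1) E F) : ε ≤ absorbConst n := by
  obtain ⟨e, x₀, y₀, rs, A, hfan, hprod⟩ :=
    exists_isRichFan_prod_side_le hn hdim hE hF ha hb hρ hε hab hEa hFb h
  have hpow : ε ^ (n + 2) ≤ 2 ^ (n + 5) * (32 * (64 * n) ^ n) := by
    refine le_of_mul_le_mul_left (a := b * ε / ρ) ?_ (by positivity)
    calc b * ε / ρ * ε ^ (n + 2)
        ≤ 2 ^ (n + 5) * (∏ j, rs j) * ε ^ (n + 2) := by gcongr; exact hfan.le_prod_side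
      _ = 2 ^ (n + 5) * ((∏ j, rs j) * ε ^ (n + 2)) := mul_assoc _ _ _
      _ ≤ 2 ^ (n + 5) * (32 * (64 * n) ^ n * (b * ε / ρ)) := by gcongr
      _ = b * ε / ρ * (2 ^ (n + 5) * (32 * (64 * n) ^ n)) := by ring
  have hK : (2 : ℝ) ^ (n + 5) * (32 * (64 * n) ^ n) ≤ absorbConst n :=
    calc (2 : ℝ) ^ (n + 5) * (32 * (64 * n) ^ n) = 2 ^ (n + 10) * (64 * n) ^ n := by ring
      _ ≤ absorbConst n := by
        unfold absorbConst
        gcongr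
        · exact one_le_two
        · omega
  by_contra! hlt
  have := le_self_pow₀ (n := n + 2) ((one_le_absorbConst hn).trans hlt.le) (by omega)
  linarith

/-- A rich fan with the numerical relations, in terms of one large parameter `T`, that drive the
choice of all further scales. -/
structure IsScaledFan (E F : Set (V × ℝ)) (T a b α β : ℝ) (e : OrthonormalBasis (Fin n) ℝ V)
    (x₀ y₀ : V × ℝ) (r rs : Fin n → ℝ) (ρ : ℝ) (A : Set V) : Prop
    extends IsRichFan E F α β e x₀ y₀ rs A where
  le_scale : absorbConst n ≤ T
  pos_fst : 0 < α
  pos_snd : 0 < β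
  dual_side_pos : ∀ j, 0 < r j
  side_mul_side : ∀ j, r j * rs j = ρ
  mul_absorbConst_fst : a * absorbConst n = β * ρ * T
  mul_absorbConst_snd : b * absorbConst n = α * ρ * T
  fiber_mul_fiber : α * β * T ^ 2 = absorbConst n ^ 2 * ρ ^ n
  prod_side_le : ∏ j, rs j ≤ T ^ (n + 2) * α

lemma exists_isScaledFan {T : ℝ} (hn : 0 < n) (hdim : Module.finrank ℝ V = n)
    (hE : MeasurableSet E) (hF : MeasurableSet F) (ha : 0 < a) (hb : 0 < b) (hρ : 0 < ρ)
    (hT : absorbConst n ≤ T) (hab : ρ ^ (n + 2) = a * b) (hEa : volume E ≤ ENNReal.ofReal a)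
    (hFb : volume F ≤ ENNReal.ofReal b)
    (h : ENNReal.ofReal (absorbConst n / T * ρ ^ (n + 1)) ≤ incidence (-1) E F) :
    ∃ (α β : ℝ) (e : OrthonormalBasis (Fin n) ℝ V) (x₀ y₀ : V × ℝ) (r rs : Fin n → ℝ) (A : Set V),
      IsScaledFan E F T a b α β e x₀ y₀ r rs ρ A := by
  have hK := one_le_absorbConst hn
  set K := absorbConst n
  have hT₀ : 0 < T := by linarith
  obtain ⟨e, x₀, y₀, rs, A, hfan, hprod⟩ := exists_isRichFan_prod_side_le hn hdim hE hF ha hb hρ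
    (by positivity : 0 < K / T) hab hEa hFb h
  set α := b * (K / T) / ρ with hα
  set β := a * (K / T) / ρ with hβ
  have hα₀ : 0 < α := by positivity
  have hr : ∀ j, ρ / rs j * rs j = ρ := fun j => div_mul_cancel₀ _ (hfan.side_pos j).ne'
  have hαβ : α * β * T ^ 2 = K ^ 2 * ρ ^ n := by
    rw [hα, hβ]
    field_simp
    linear_combination (-1 : ℝ) * hab
  refine ⟨α, β, e, x₀, y₀, fun j => ρ / rs j, rs, A, hfan, hT, hα₀, by positivity,
    fun j => div_pos hρ (hfan.side_pos j), hr, ?_, ?_, hαβ, ?_⟩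
  · rw [hβ]; field_simp; rfl
  · rw [hα]; field_simp; rfl
  · have hL : 32 * (64 * n) ^ n ≤ K ^ (n + 2) :=
      calc (32 : ℝ) * (64 * n) ^ n ≤ 2 ^ (2 * n + 10) * (64 * n) ^ n := by
            gcongr
            calc (32 : ℝ) = 2 ^ 5 := by norm_num
              _ ≤ 2 ^ (2 * n + 10) := pow_le_pow_right₀ one_le_two (by omega)
        _ ≤ K ^ (n + 2) := le_self_pow₀ hK (by omega)
    rw [div_pow, mul_div_assoc', div_le_iff₀ (by positivity)] at hprod
    refine le_of_mul_le_mul_right (a := K ^ (n + 2)) ?_ (by positivity)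
    calc (∏ j, rs j) * K ^ (n + 2) ≤ 32 * (64 * n) ^ n * α * T ^ (n + 2) := hprod
      _ ≤ K ^ (n + 2) * α * T ^ (n + 2) := by gcongr
      _ = T ^ (n + 2) * α * K ^ (n + 2) := by ring

lemma IsScaledFan.prod_mul_prod {T α β : ℝ} {e : OrthonormalBasis (Fin n) ℝ V} {x₀ y₀ : V × ℝ}
    {r rs : Fin n → ℝ} {A : Set V} (hfan : IsScaledFan E F T a b α β e x₀ y₀ r rs ρ A) :
    (∏ j, r j) * ∏ j, rs j = ρ ^ n := by
  simp [← Finset.prod_mul_distrib, hfan.side_mul_side]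

lemma IsScaledFan.prod_dual_side_le {T α β : ℝ} {e : OrthonormalBasis (Fin n) ℝ V}
    {x₀ y₀ : V × ℝ} {r rs : Fin n → ℝ} {A : Set V} (hn : 0 < n)
    (hfan : IsScaledFan E F T a b α β e x₀ y₀ r rs ρ A) : ∏ j, r j ≤ T ^ 2 * β := by
  have hK := one_le_absorbConst hn
  have hα := hfan.pos_fst
  have hr := Finset.prod_pos fun j (_ : j ∈ Finset.univ) => hfan.dual_side_pos j
  have hrs := Finset.prod_pos fun j (_ : j ∈ Finset.univ) => hfan.side_pos j
  set K := absorbConst n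
  have hpow : (2 : ℝ) ^ (n + 5) ≤ K ^ 2 :=
    (two_pow_le_absorbConst hn (by omega)).trans (le_self_pow₀ hK two_ne_zero)
  refine le_of_mul_le_mul_right (a := α) ?_ hα
  calc (∏ j, r j) * α ≤ (∏ j, r j) * (2 ^ (n + 5) * ∏ j, rs j) := by
        gcongr; exact hfan.le_prod_side
    _ ≤ (∏ j, r j) * (K ^ 2 * ∏ j, rs j) := by gcongr
    _ = K ^ 2 * ρ ^ n := by rw [← hfan.prod_mul_prod]; ring
    _ = T ^ 2 * β * α := by rw [← hfan.fiber_mul_fiber]; ring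

end RefinedBound

section ScaledFan

variable {V : Type*} [NormedAddCommGroup V] [InnerProductSpace ℝ V] [FiniteDimensional ℝ V]
  [MeasurableSpace V] [BorelSpace V] {n : ℕ} {E F : Set (V × ℝ)} {T a b α β ρ : ℝ}
  {e : OrthonormalBasis (Fin n) ℝ V} {x₀ y₀ : V × ℝ} {r rs : Fin n → ℝ} {A : Set V}

lemma IsScaledFan.tail_le (hn : 0 < n) (hρ : 0 < ρ)
    (hfan : IsScaledFan E F T a b α β e x₀ y₀ r rs ρ A) :
    n * (2 ^ n * ∏ j, rs j) / (4 * T ^ (n + 3) * ρ) * a ≤ β / 16 * (α / 32) := by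
  have hα := hfan.pos_fst
  have hβ := hfan.pos_snd
  have hK₀ := zero_lt_one.trans_le (one_le_absorbConst hn)
  have hT := hK₀.trans_le hfan.le_scale
  have hsmall : n * 2 ^ n * 128 ≤ absorbConst n :=
    calc n * 2 ^ n * 128 = n * (2 : ℝ) ^ (n + 7) := by ring
      _ ≤ absorbConst n := natCast_mul_two_pow_le_absorbConst hn (by omega)
  rw [div_mul_eq_mul_div, div_le_iff₀ (by positivity)]
  refine le_of_mul_le_mul_right (a := absorbConst n) ?_ hK₀
  calc n * (2 ^ n * ∏ j, rs j) * a * absorbConst n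
      = n * (2 ^ n * ∏ j, rs j) * (β * ρ * T) := by rw [← hfan.mul_absorbConst_fst]; ring
    _ ≤ n * (2 ^ n * (T ^ (n + 2) * α)) * (β * ρ * T) := by gcongr; exact hfan.prod_side_le
    _ = n * 2 ^ n * 128 * (T ^ (n + 3) * α * β * ρ / 128) := by ring
    _ ≤ absorbConst n * (T ^ (n + 3) * α * β * ρ / 128) := by gcongr
    _ = β / 16 * (α / 32) * (4 * T ^ (n + 3) * ρ) * absorbConst n := by ring

lemma IsScaledFan.prod_smul_le (hn : 0 < n)
    (hfan : IsScaledFan E F T a b α β e x₀ y₀ r rs ρ A) :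
    ∏ j, (T ^ (n + 3) • r) j ≤ T ^ (n * (n + 3) + 2) * β := by
  have hT : 0 < T := zero_lt_one.trans_le ((one_le_absorbConst hn).trans hfan.le_scale)
  calc ∏ j, (T ^ (n + 3) • r) j = (T ^ (n + 3)) ^ n * ∏ j, r j := by
        simp [Finset.prod_mul_distrib]
    _ ≤ (T ^ (n + 3)) ^ n * (T ^ 2 * β) := by gcongr; exact hfan.prod_dual_side_le hn
    _ = T ^ (n * (n + 3) + 2) * β := by ring

lemma IsScaledFan.center_le (hn : 0 < n) (hfan : IsScaledFan E F T a b α β e x₀ y₀ r rs ρ A) :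
    2 ^ n * (1 / T ^ (n * (n + 3) + 3) * ∏ j, (T ^ (n + 3) • r) j) ≤ β / 16 := by
  have hβ := hfan.pos_snd
  have hT : 0 < T := zero_lt_one.trans_le ((one_le_absorbConst hn).trans hfan.le_scale)
  have hsmall : 2 ^ n * 16 ≤ T :=
    calc (2 : ℝ) ^ n * 16 = 2 ^ (n + 4) := by ring
      _ ≤ T := (two_pow_le_absorbConst hn (by omega)).trans hfan.le_scale
  calc 2 ^ n * (1 / T ^ (n * (n + 3) + 3) * ∏ j, (T ^ (n + 3) • r) j)
      ≤ 2 ^ n * (1 / T ^ (n * (n + 3) + 3) * (T ^ (n * (n + 3) + 2) * β)) := by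
        gcongr; exact hfan.prod_smul_le hn
    _ = 2 ^ n * 16 / T * (β / 16) := by field_simp; ring
    _ ≤ 1 * (β / 16) := by gcongr; exact (div_le_one hT).2 hsmall
    _ = β / 16 := one_mul _

lemma IsScaledFan.tail_dual_le (hn : 0 < n) (hρ : 0 < ρ)
    (hfan : IsScaledFan E F T a b α β e x₀ y₀ r rs ρ A) :
    n * (2 ^ n * ∏ j, (T ^ (n + 3) • r) j) /
      (4 * T ^ (n * (n + 3) + 3) * (T ^ (n + 3) * ρ)) * b ≤ α * β / 32 := by
  have hα := hfan.pos_fst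
  have hβ := hfan.pos_snd
  have hK₁ := one_le_absorbConst hn
  have hT₁ : 1 ≤ T := hK₁.trans hfan.le_scale
  have hsmall : n * 2 ^ n * 8 ≤ absorbConst n :=
    calc n * 2 ^ n * 8 = n * (2 : ℝ) ^ (n + 3) := by ring
      _ ≤ absorbConst n := natCast_mul_two_pow_le_absorbConst hn (by omega)
  rw [div_mul_eq_mul_div, div_le_iff₀ (by positivity)]
  refine le_of_mul_le_mul_right (a := absorbConst n) ?_ (by linarith)
  calc n * (2 ^ n * ∏ j, (T ^ (n + 3) • r) j) * b * absorbConst n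
      = n * (2 ^ n * ∏ j, (T ^ (n + 3) • r) j) * (α * ρ * T) := by
        rw [← hfan.mul_absorbConst_snd]; ring
    _ ≤ n * (2 ^ n * (T ^ (n * (n + 3) + 2) * β)) * (α * ρ * T) := by
        gcongr; exact hfan.prod_smul_le hn
    _ = n * 2 ^ n * 8 * (T ^ (n * (n + 3) + 3) * 1 * α * β * ρ / 8) := by ring
    _ ≤ absorbConst n * (T ^ (n * (n + 3) + 3) * T ^ (n + 3) * α * β * ρ / 8) := by
        gcongr; exact one_le_pow₀ hT₁
    _ = α * β / 32 * (4 * T ^ (n * (n + 3) + 3) * (T ^ (n + 3) * ρ)) * absorbConst n := by ring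

lemma IsScaledFan.gain_le (hn : 0 < n) (hρ : 0 < ρ)
    (hfan : IsScaledFan E F T a b α β e x₀ y₀ r rs ρ A) :
    2 ^ n * ρ ^ (n + 1) / T ^ localizationExponent n ≤
      α ^ 2 * β * (1 / T ^ (n * (n + 3) + 3) * T ^ (n + 3) * ρ) / (2 ^ (n + 8) * ∏ j, rs j) := by
  have hα := hfan.pos_fst
  have hβ := hfan.pos_snd
  have hT₁ : 1 ≤ T := (one_le_absorbConst hn).trans hfan.le_scale
  have hrs := Finset.prod_pos fun j (_ : j ∈ Finset.univ) => hfan.side_pos j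
  have hsmall : (2 : ℝ) ^ (2 * n + 8) ≤ absorbConst n ^ 2 :=
    (two_pow_le_absorbConst hn (by omega)).trans
      (le_self_pow₀ (one_le_absorbConst hn) two_ne_zero)
  rw [div_le_div_iff₀ (by positivity) (by positivity)]
  calc 2 ^ n * ρ ^ (n + 1) * (2 ^ (n + 8) * ∏ j, rs j)
      ≤ 2 ^ n * ρ ^ (n + 1) * (2 ^ (n + 8) * (T ^ (n + 2) * α)) := by
        gcongr; exact hfan.prod_side_le
    _ = 2 ^ (2 * n + 8) * (ρ ^ n * ρ * T ^ (n + 2) * α) := by ring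
    _ ≤ absorbConst n ^ 2 * (ρ ^ n * ρ * T ^ (n + 2) * α) := by gcongr
    _ = α ^ 2 * β * ρ * T ^ (n + 4) * 1 := by
        linear_combination (-(ρ * T ^ (n + 2) * α)) * hfan.fiber_mul_fiber
    _ ≤ α ^ 2 * β * ρ * T ^ (n + 4) * T ^ (n + 3) := by gcongr; exact one_le_pow₀ hT₁
    _ = α ^ 2 * β * (1 / T ^ (n * (n + 3) + 3) * T ^ (n + 3) * ρ) * T ^ localizationExponent n := by
        unfold localizationExponent
        field_simp
        ring

lemma IsScaledFan.le_incidence_paraboloidBox (hn : 0 < n) (hρ : 0 < ρ) (hE : MeasurableSet E)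
    (hF : MeasurableSet F) (hEa : volume E ≤ ENNReal.ofReal a) (hFb : volume F ≤ ENNReal.ofReal b)
    (hfan : IsScaledFan E F T a b α β e x₀ y₀ r rs ρ A) :
    ENNReal.ofReal (2 ^ n * ρ ^ (n + 1) / T ^ localizationExponent n) ≤
      incidence (-1)
        (E ∩ paraboloidBox 1 e x₀.1 y₀ (T ^ localizationExponent n • r)
          (T ^ localizationExponent n * ρ))
        (F ∩ paraboloidBox (-1) e y₀.1 x₀ (T ^ localizationExponent n • rs)
          (T ^ localizationExponent n * ρ)) := by
  have hT₁ : 1 ≤ T := (one_le_absorbConst hn).trans hfan.le_scale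
  have hnT : 6 * (n : ℝ) < T := by
    have h₀ : (0 : ℝ) < n := Nat.cast_pos.2 hn
    have h₁ := natCast_mul_two_pow_le_absorbConst hn (m := 3) (by omega)
    have h₂ := hfan.le_scale
    linarith
  have hscale : 2 * n * T ^ (n + 3) * (T ^ (n * (n + 3) + 3) + 2) < T ^ localizationExponent n :=
    calc 2 * n * T ^ (n + 3) * (T ^ (n * (n + 3) + 3) + 2)
        ≤ 2 * n * T ^ (n + 3) * (3 * T ^ (n * (n + 3) + 3)) := by
          have := one_le_pow₀ hT₁ (n := n * (n + 3) + 3)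
          gcongr
          linarith
      _ = 6 * n * T ^ (n + 3 + (n * (n + 3) + 3)) := by ring
      _ < T * T ^ (n + 3 + (n * (n + 3) + 3)) := by gcongr
      _ = T ^ localizationExponent n := by unfold localizationExponent; ring
  exact (ENNReal.ofReal_le_ofReal (hfan.gain_le hn hρ)).trans <|
    hfan.toIsRichFan.le_incidence_paraboloidBox hfan.dual_side_pos hfan.side_mul_side hE hF
      hfan.pos_fst hfan.pos_snd hEa hFb (one_le_pow₀ hT₁) (by positivity) hscale (by positivity)
      ⟨0, hn⟩ (hfan.tail_le hn hρ) (hfan.center_le hn) (hfan.tail_dual_le hn hρ)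

lemma volume_paraboloidBox_div_sq_smul_le (hn : 0 < n) (hρ : 0 < ρ) (ha : 0 < a)
    (hr : ∀ j, 0 < r j) (hT : absorbConst n ≤ T) (hprod : ∏ j, r j ≤ T ^ (n + 2) * α)
    (haT : a * absorbConst n = α * ρ * T) (s : ℝ) (c : V) (z : V × ℝ) :
    volume (paraboloidBox s e c z ((1 / T ^ 2) • r) ((1 / T ^ 2) ^ 2 * ρ)) ≤
      ENNReal.ofReal a := by
  have hT₀ : 0 < T := zero_lt_one.trans_le ((one_le_absorbConst hn).trans hT)
  have hpow : 2 ^ (n + 1) ≤ T ^ (n + 2) :=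
    ((two_pow_le_absorbConst hn (by omega)).trans hT).trans
      (le_self_pow₀ ((one_le_absorbConst hn).trans hT) (by omega))
  have hside : ∀ j, 0 < ((1 / T ^ 2) • r) j := fun j => mul_pos (by positivity) (hr j)
  rw [volume_paraboloidBox e c s z hside (by positivity), Fintype.card_fin]
  refine ENNReal.ofReal_le_ofReal ?_
  calc 2 ^ n * (∏ j, ((1 / T ^ 2) • r) j) * (2 * ((1 / T ^ 2) ^ 2 * ρ))
      = 2 ^ n * ((1 / T ^ 2) ^ n * ∏ j, r j) * (2 * ((1 / T ^ 2) ^ 2 * ρ)) := by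
        simp [Finset.prod_mul_distrib]
    _ ≤ 2 ^ n * ((1 / T ^ 2) ^ n * (T ^ (n + 2) * α)) * (2 * ((1 / T ^ 2) ^ 2 * ρ)) := by gcongr
    _ = 2 ^ (n + 1) / T ^ (n + 2) * (α * ρ * T / T) := by
        rw [div_pow, one_pow, ← pow_mul]
        field_simp
        ring
    _ = 2 ^ (n + 1) / T ^ (n + 2) * (a * (absorbConst n / T)) := by rw [← haT, mul_div_assoc]
    _ ≤ 1 * (a * 1) := by
        have hK := zero_lt_one.trans_le (one_le_absorbConst hn)
        gcongr
        · exact (div_le_one (by positivity)).2 hpow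
        · exact (div_le_one hT₀).2 hT
    _ = a := by ring

lemma two_mul_ceil_add_one_pow_sq_le (hn : 0 < n) (hT : absorbConst n ≤ T) :
    ((2 * (⌈T ^ localizationExponent n / (1 / T ^ (localizationExponent n + 5))⌉₊ : ℝ) + 1) ^
      (n + 1)) ^ 2 ≤ T ^ (2 * (n + 1) * (2 * localizationExponent n + 6)) := by
  set k := localizationExponent n
  have hT₁ : 1 ≤ T := (one_le_absorbConst hn).trans hT
  have hT₅ : 5 ≤ T := by
    have := (two_pow_le_absorbConst hn (m := 3) (by omega)).trans hT
    linarith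
  have hquot : T ^ k / (1 / T ^ (k + 5)) = T ^ (2 * k + 5) := by field_simp; ring
  rw [hquot]
  have hceil := (Nat.ceil_lt_add_one (by positivity : 0 ≤ T ^ (2 * k + 5))).le
  have hpow := one_le_pow₀ hT₁ (n := 2 * k + 5)
  have hbase : 2 * (⌈T ^ (2 * k + 5)⌉₊ : ℝ) + 1 ≤ T ^ (2 * k + 6) :=
    calc 2 * (⌈T ^ (2 * k + 5)⌉₊ : ℝ) + 1 ≤ 5 * T ^ (2 * k + 5) := by linarith
      _ ≤ T * T ^ (2 * k + 5) := by gcongr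
      _ = T ^ (2 * k + 6) := by ring
  calc ((2 * (⌈T ^ (2 * k + 5)⌉₊ : ℝ) + 1) ^ (n + 1)) ^ 2 ≤ ((T ^ (2 * k + 6)) ^ (n + 1)) ^ 2 := by
        gcongr
    _ = T ^ (2 * (n + 1) * (2 * k + 6)) := by ring

lemma div_prod_le_cell_density (hn : 0 < n) (hT : absorbConst n ≤ T) (hρ : 0 < ρ)
    (hr : ∀ j, 0 < r j) {G : ℝ} (hG : 0 < G)
    (hGT : G ≤ T ^ (2 * (n + 1) * (2 * localizationExponent n + 6))) {θ : ℝ} (hθ : 0 < θ)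
    (hθ₁ : θ ≤ 1) :
    ρ ^ (n + 1) / (T ^ densityExponent n * ∏ j, r j) ≤
      2 ^ n * ρ ^ (n + 1) / T ^ localizationExponent n / G / (2 ^ n * ∏ j, (θ • r) j) := by
  have hT₀ : 0 < T := zero_lt_one.trans_le ((one_le_absorbConst hn).trans hT)
  have hpos : 0 < ∏ j, (θ • r) j := Finset.prod_pos fun j _ => mul_pos hθ (hr j)
  have hprod : ∏ j, (θ • r) j ≤ ∏ j, r j := Finset.prod_le_prod
    (fun j _ => (mul_pos hθ (hr j)).le) fun j _ => mul_le_of_le_one_left (hr j).le hθ₁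
  calc ρ ^ (n + 1) / (T ^ densityExponent n * ∏ j, r j)
      = ρ ^ (n + 1) / (T ^ localizationExponent n *
          T ^ (2 * (n + 1) * (2 * localizationExponent n + 6)) * ∏ j, r j) := by
        rw [← pow_add, densityExponent]
    _ ≤ ρ ^ (n + 1) / (T ^ localizationExponent n * G * ∏ j, (θ • r) j) := by gcongr
    _ = _ := by field_simp

lemma IsScaledFan.exists_paraboloidBox_le_volume_inter (hn : 0 < n) (hρ : 0 < ρ)
    (hE : MeasurableSet E) (hF : MeasurableSet F) (hEa : volume E ≤ ENNReal.ofReal a)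
    (hFb : volume F ≤ ENNReal.ofReal b) (hfan : IsScaledFan E F T a b α β e x₀ y₀ r rs ρ A) :
    ∃ x y : V × ℝ, paraboloidDefect 1 y x = 0 ∧
      ENNReal.ofReal (ρ ^ (n + 1) / (T ^ densityExponent n * ∏ j, rs j)) ≤
        volume (E ∩ paraboloidBox 1 e x.1 y ((1 / T ^ 2) • r) ((1 / T ^ 2) ^ 2 * ρ)) ∧
      ENNReal.ofReal (ρ ^ (n + 1) / (T ^ densityExponent n * ∏ j, r j)) ≤
        volume (F ∩ paraboloidBox (-1) e y.1 x ((1 / T ^ 2) • rs) ((1 / T ^ 2) ^ 2 * ρ)) := by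
  have hT₁ : 1 ≤ T := (one_le_absorbConst hn).trans hfan.le_scale
  set θ := 1 / T ^ (localizationExponent n + 5) with hθ
  have hθ₀ : 0 < θ := by positivity
  have hθκ : θ ≤ 1 / T ^ 2 :=
    one_div_le_one_div_of_le (by positivity) (pow_le_pow_right₀ hT₁ (by omega))
  have hκ₁ : 1 / T ^ 2 ≤ 1 := div_le_one_of_le₀ (one_le_pow₀ hT₁) (by positivity)
  have hκ : θ * (1 + 2 * n * T ^ localizationExponent n) ≤ (1 / T ^ 2) ^ 2 := by
    have h₀ : (1 : ℝ) ≤ n := Nat.one_le_cast.2 hn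
    have h₁ := natCast_mul_two_pow_le_absorbConst hn (m := 2) (by omega)
    have h₂ := hfan.le_scale
    have h₃ := one_le_pow₀ hT₁ (n := localizationExponent n)
    calc θ * (1 + 2 * n * T ^ localizationExponent n)
        ≤ θ * ((1 + 2 * n) * T ^ localizationExponent n) := by gcongr; linarith
      _ ≤ θ * (T * T ^ localizationExponent n) := by gcongr; linarith
      _ = (1 / T ^ 2) ^ 2 := by rw [hθ]; field_simp; ring
  obtain ⟨x, y, hxy, hx, hy⟩ := exists_paraboloidBox_le_volume_inter_of_le_incidence hE hF
    hfan.dual_side_pos hfan.side_pos hρ hfan.side_mul_side hθ₀ hκ hθκ (Nat.le_ceil _)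
    (by positivity) (hfan.le_incidence_paraboloidBox hn hρ hE hF hEa hFb)
  have hG := two_mul_ceil_add_one_pow_sq_le hn hfan.le_scale
  refine ⟨x, y, hxy, le_trans (ENNReal.ofReal_le_ofReal ?_) hx,
    le_trans (ENNReal.ofReal_le_ofReal ?_) hy⟩
  · exact div_prod_le_cell_density hn hfan.le_scale hρ hfan.side_pos (by positivity) hG hθ₀
      (hθκ.trans hκ₁)
  · exact div_prod_le_cell_density hn hfan.le_scale hρ hfan.dual_side_pos (by positivity) hG hθ₀
      (hθκ.trans hκ₁)

end ScaledFan

section Density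

variable {V : Type*} [NormedAddCommGroup V] [InnerProductSpace ℝ V] [FiniteDimensional ℝ V]
  [MeasurableSpace V] [BorelSpace V] {n : ℕ} {E F : Set (V × ℝ)} {T a b ρ : ℝ}

lemma IsScaledFan.one_div_pow_eq_mul {α β : ℝ} {e : OrthonormalBasis (Fin n) ℝ V} {x₀ y₀ : V × ℝ}
    {r rs : Fin n → ℝ} {A : Set V} (hfan : IsScaledFan E F T a b α β e x₀ y₀ r rs ρ A) (ha : 0 < a)
    (hb : 0 < b) (hρ : 0 < ρ) (hT : 0 < T) (hab : ρ ^ (n + 2) = a * b) :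
    (1 / T) ^ (2 * densityExponent n) =
      ρ ^ (n + 1) / (T ^ densityExponent n * ∏ j, rs j) / a *
        (ρ ^ (n + 1) / (T ^ densityExponent n * ∏ j, r j) / b) := by
  have hr := Finset.prod_pos fun j (_ : j ∈ Finset.univ) => hfan.dual_side_pos j
  have hrs := Finset.prod_pos fun j (_ : j ∈ Finset.univ) => hfan.side_pos j
  calc (1 / T) ^ (2 * densityExponent n)
      = ρ ^ n * ρ ^ (n + 2) / ((T ^ densityExponent n) ^ 2 * ρ ^ n * ρ ^ (n + 2)) := by
        rw [div_pow, one_pow, pow_mul']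
        field_simp
    _ = ρ ^ n * ρ ^ (n + 2) / ((T ^ densityExponent n) ^ 2 *
          ((∏ j, r j) * ∏ j, rs j) * (a * b)) := by rw [hfan.prod_mul_prod, hab]
    _ = _ := by field_simp; ring

lemma exists_paraboloidBox_le_density (hn : 0 < n) (hdim : Module.finrank ℝ V = n)
    (hE : MeasurableSet E) (hF : MeasurableSet F) (ha : 0 < a) (hb : 0 < b) (hρ : 0 < ρ)
    (hT : absorbConst n ≤ T) (hab : ρ ^ (n + 2) = a * b) (hEa : volume E = ENNReal.ofReal a)
    (hFb : volume F = ENNReal.ofReal b)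
    (h : ENNReal.ofReal (absorbConst n / T * ρ ^ (n + 1)) ≤ incidence (-1) E F) :
    ∃ (e : OrthonormalBasis (Fin n) ℝ V) (x y : V × ℝ) (r rs : Fin n → ℝ) (t : ℝ),
      paraboloidDefect 1 y x = 0 ∧ 0 < t ∧ (∀ j, 0 < r j) ∧ (∀ j, 0 < rs j) ∧
      (∀ j, r j * rs j = t) ∧ volume (paraboloidBox 1 e x.1 y r t) ≤ volume E ∧
      volume (paraboloidBox (-1) e y.1 x rs t) ≤ volume F ∧
      ENNReal.ofReal ((1 / T) ^ (2 * densityExponent n)) ≤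
        volume (E ∩ paraboloidBox 1 e x.1 y r t) / volume E *
          (volume (F ∩ paraboloidBox (-1) e y.1 x rs t) / volume F) := by
  have hT₁ : 1 ≤ T := (one_le_absorbConst hn).trans hT
  have hT₀ : 0 < T := by linarith
  have hκ : 0 < 1 / T ^ 2 := by positivity
  obtain ⟨α, β, e, x₀, y₀, r, rs, A, hfan⟩ :=
    exists_isScaledFan hn hdim hE hF ha hb hρ hT hab hEa.le hFb.le h
  obtain ⟨x, y, hxy, hx, hy⟩ :=
    hfan.exists_paraboloidBox_le_volume_inter hn hρ hE hF hEa.le hFb.le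
  have hβ := hfan.pos_snd
  have hrs := Finset.prod_pos fun j (_ : j ∈ Finset.univ) => hfan.side_pos j
  have hprod : ∏ j, r j ≤ T ^ (n + 2) * β :=
    (hfan.prod_dual_side_le hn).trans (by gcongr; omega)
  refine ⟨e, x, y, (1 / T ^ 2) • r, (1 / T ^ 2) • rs, (1 / T ^ 2) ^ 2 * ρ, hxy, by positivity,
    fun j => mul_pos hκ (hfan.dual_side_pos j), fun j => mul_pos hκ (hfan.side_pos j), fun j => ?_,
    hEa ▸ volume_paraboloidBox_div_sq_smul_le hn hρ ha hfan.dual_side_pos hT hprod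
      hfan.mul_absorbConst_fst _ _ _,
    hFb ▸ volume_paraboloidBox_div_sq_smul_le hn hρ hb hfan.side_pos hT hfan.prod_side_le
      hfan.mul_absorbConst_snd _ _ _, ?_⟩
  · rw [← hfan.side_mul_side j]
    simp only [Pi.smul_apply, smul_eq_mul]
    ring
  rw [hfan.one_div_pow_eq_mul ha hb hρ hT₀ hab, ENNReal.ofReal_mul (by positivity),
    ENNReal.ofReal_div_of_pos ha, ENNReal.ofReal_div_of_pos hb, hEa, hFb]
  gcongr

end Density

section Ball

variable {n : ℕ} {e : OrthonormalBasis (Fin n) ℝ (Vec n)} {x y : Pt n} {r rs : Fin n → ℝ} {ρ : ℝ}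

lemma isBallParams_of_paraboloidDefect_eq_zero (hxy : paraboloidDefect 1 y x = 0) (hρ : 0 < ρ)
    (hr : ∀ j, 0 < r j) (hrs : ∀ j, 0 < rs j) (hrrs : ∀ j, r j * rs j = ρ) :
    IsBallParams n (x, y) e r rs ρ := by
  refine ⟨?_, hρ, e.orthonormal, hr, hrs, hrrs⟩
  simp only [paraboloidDefect] at hxy
  rw [norm_sub_rev]
  linarith

lemma image_fst_ballI (hball : IsBallParams n (x, y) e r rs ρ) :
    Prod.fst '' ballI n (x, y) e r rs ρ = paraboloidBox 1 e x.1 y r ρ := by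
  obtain ⟨hxy, -, -, -, hrs, -⟩ := hball
  ext p
  simp only [paraboloidBox, paraboloidDefect, one_mul]
  refine ⟨?_, fun hp => ⟨(p, (y.1, p.2 - ‖y.1 - p.1‖ ^ 2)), ⟨rfl, hp.1, hp.2, ?_, ?_⟩, rfl⟩⟩
  · rintro ⟨z, hz, rfl⟩
    exact ⟨hz.2.1, hz.2.2.1⟩
  · simpa using hrs
  · have h := hp.2
    rw [norm_sub_rev] at h
    convert h using 2
    dsimp only at hxy ⊢
    linarith

lemma image_snd_ballI (hball : IsBallParams n (x, y) e r rs ρ) :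
    Prod.snd '' ballI n (x, y) e r rs ρ = paraboloidBox (-1) e y.1 x rs ρ := by
  obtain ⟨hxy, -, -, hr, -, -⟩ := hball
  ext q
  simp only [paraboloidBox, paraboloidDefect, neg_one_mul, sub_neg_eq_add]
  refine ⟨?_, fun hq => ⟨((x.1, q.2 + ‖q.1 - x.1‖ ^ 2), q), ⟨?_, ?_, ?_, hq.1, hq.2⟩, rfl⟩⟩
  · rintro ⟨z, hz, rfl⟩
    exact ⟨hz.2.2.2.1, hz.2.2.2.2⟩
  · dsimp only; ring
  · simpa using hr
  · have h := hq.2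
    convert h using 2
    dsimp only at hxy ⊢
    rw [norm_sub_rev x.1 y.1]
    linarith

/-- The supremum, over the admissible balls that are no larger than `E` and `F`, of the product
of the densities of the two sets on the ball, raised to the power `δ`. -/
def ballDensity (n : ℕ) (δ : ℝ) (E F : Set (Pt n)) : ℝ≥0∞ :=
  ⨆ (z : Pt n × Pt n) (e : Fin n → Vec n) (r : Fin n → ℝ) (rs : Fin n → ℝ) (ρ : ℝ)
    (_ : IsBallParams n z e r rs ρ)
    (_ : volume (Prod.fst '' ballI n z e r rs ρ) ≤ volume E)
    (_ : volume (Prod.snd '' ballI n z e r rs ρ) ≤ volume F),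
    (volume (E ∩ Prod.fst '' ballI n z e r rs ρ) / volume E *
      (volume (F ∩ Prod.snd '' ballI n z e r rs ρ) / volume F)) ^ δ

lemma ofReal_rpow_le_ballDensity (hn : 0 < n) {E F : Set (Pt n)} {T a b δ : ℝ}
    (hE : MeasurableSet E) (hF : MeasurableSet F) (ha : 0 < a) (hb : 0 < b) (hρ : 0 < ρ)
    (hT : absorbConst n ≤ T) (hab : ρ ^ (n + 2) = a * b) (hEa : volume E = ENNReal.ofReal a)
    (hFb : volume F = ENNReal.ofReal b) (hδ : 0 ≤ δ)
    (h : ENNReal.ofReal (absorbConst n / T * ρ ^ (n + 1)) ≤ incidence (-1) E F) :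
    ENNReal.ofReal ((1 / T) ^ (2 * densityExponent n)) ^ δ ≤ ballDensity n δ E F := by
  obtain ⟨e, x, y, r, rs, t, hxy, ht, hr, hrs, hrrs, hvE, hvF, hdensity⟩ :=
    exists_paraboloidBox_le_density hn finrank_euclideanSpace_fin hE hF ha hb hρ hT hab hEa hFb h
  have hball := isBallParams_of_paraboloidDefect_eq_zero (e := e) hxy ht hr hrs hrrs
  rw [← image_fst_ballI hball] at hvE hdensity
  rw [← image_snd_ballI hball] at hvF hdensity
  exact (ENNReal.rpow_le_rpow hdensity hδ).trans <| le_iSup_of_le (x, y) <| le_iSup_of_le e <|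
    le_iSup_of_le r <| le_iSup_of_le rs <| le_iSup_of_le t <| le_iSup_of_le hball <|
    le_iSup_of_le hvE <| le_iSup_of_le hvF le_rfl

lemma le_mul_ballDensity_of_le_incidence (hn : 0 < n) {E F : Set (Pt n)} {a b l : ℝ}
    (hE : MeasurableSet E) (hF : MeasurableSet F) (ha : 0 < a) (hb : 0 < b) (hρ : 0 < ρ)
    (hab : ρ ^ (n + 2) = a * b) (hEa : volume E = ENNReal.ofReal a)
    (hFb : volume F = ENNReal.ofReal b) (hl : 0 < l)
    (h : ENNReal.ofReal l ≤ incidence (-1) E F) :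
    ENNReal.ofReal l ≤ ENNReal.ofReal (absorbConst n ^ 2 * ρ ^ (n + 1)) *
      ballDensity n (1 / (2 * densityExponent n : ℕ)) E F := by
  have hK := one_le_absorbConst hn
  set K := absorbConst n
  set ε := l / ρ ^ (n + 1) with hε
  have hε₀ : 0 < ε := by positivity
  have hlε : l = ε * ρ ^ (n + 1) := (div_mul_cancel₀ _ (by positivity)).symm
  rw [hlε] at h ⊢
  have hεK : ε ≤ K := le_absorbConst_of_le_incidence hn finrank_euclideanSpace_fin hE hF ha hb hρ
    hε₀ hab hEa.le hFb.le h
  have hT : K ≤ K ^ 2 / ε := by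
    rw [le_div_iff₀ hε₀, sq]
    gcongr
  have hscaled : ENNReal.ofReal (K / (K ^ 2 / ε) * ρ ^ (n + 1)) ≤ incidence (-1) E F := by
    refine (ENNReal.ofReal_le_ofReal ?_).trans h
    gcongr
    rw [show K / (K ^ 2 / ε) = ε / K by field_simp]
    exact div_le_self hε₀.le hK
  have hm : 2 * densityExponent n ≠ 0 := by
    simp only [densityExponent, localizationExponent]
    omega
  have hS := ofReal_rpow_le_ballDensity hn hE hF ha hb hρ hT hab hEa hFb
    (by positivity : (0 : ℝ) ≤ 1 / (2 * densityExponent n : ℕ)) hscaled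
  rw [ENNReal.ofReal_rpow_of_pos (by positivity), one_div (Nat.cast _),
    Real.pow_rpow_inv_natCast (by positivity) hm, one_div_div] at hS
  calc ENNReal.ofReal (ε * ρ ^ (n + 1))
      = ENNReal.ofReal (K ^ 2 * ρ ^ (n + 1)) * ENNReal.ofReal (ε / K ^ 2) := by
        rw [← ENNReal.ofReal_mul (by positivity)]
        congr 1
        field_simp
    _ ≤ _ := by rw [one_div]; gcongr

lemma incidence_le_mul_ballDensity (hn : 0 < n) {E F : Set (Pt n)} (hE : MeasurableSet E)
    (hF : MeasurableSet F) (hE₀ : 0 < volume E) (hE₁ : volume E < ⊤) (hF₀ : 0 < volume F)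
    (hF₁ : volume F < ⊤) :
    incidence (-1) E F ≤ ENNReal.ofReal (absorbConst n ^ 2) *
      volume E ^ ((n + 1 : ℝ) / (n + 2)) * volume F ^ ((n + 1 : ℝ) / (n + 2)) *
      ballDensity n (1 / (2 * densityExponent n : ℕ)) E F := by
  have ha := ENNReal.toReal_pos hE₀.ne' hE₁.ne
  have hb := ENNReal.toReal_pos hF₀.ne' hF₁.ne
  have hEa := (ENNReal.ofReal_toReal hE₁.ne).symm
  have hFb := (ENNReal.ofReal_toReal hF₁.ne).symm
  set a := (volume E).toReal
  set b := (volume F).toReal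
  set ρ : ℝ := (a * b) ^ ((n + 2 : ℝ)⁻¹) with hρ
  have hρ₀ : 0 < ρ := by positivity
  have hab : ρ ^ (n + 2) = a * b := by
    rw [hρ]
    exact_mod_cast Real.rpow_inv_natCast_pow (n := n + 2) (by positivity) (by omega)
  have hpow : ρ ^ (n + 1) = a ^ ((n + 1 : ℝ) / (n + 2)) * b ^ ((n + 1 : ℝ) / (n + 2)) := by
    rw [hρ, ← Real.rpow_natCast, ← Real.rpow_mul (by positivity), ← Real.mul_rpow ha.le hb.le]
    push_cast
    ring_nf
  have hconst : ENNReal.ofReal (absorbConst n ^ 2) * volume E ^ ((n + 1 : ℝ) / (n + 2)) *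
      volume F ^ ((n + 1 : ℝ) / (n + 2)) =
      ENNReal.ofReal (absorbConst n ^ 2 * ρ ^ (n + 1)) := by
    rw [hEa, hFb, ENNReal.ofReal_rpow_of_pos ha, ENNReal.ofReal_rpow_of_pos hb, mul_assoc,
      ← ENNReal.ofReal_mul (by positivity), ← hpow, ← ENNReal.ofReal_mul (by positivity)]
  rw [hconst]
  refine le_of_forall_lt_imp_le_of_dense fun t ht => ?_
  have ht_top : t ≠ ⊤ := (ht.trans_le le_top).ne
  obtain rfl | ht₀ := eq_or_ne t 0
  · exact zero_le
  rw [← ENNReal.ofReal_toReal ht_top] at ht ⊢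
  exact le_mul_ballDensity_of_le_incidence hn hE hF ha hb hρ₀ hab hEa hFb
    (ENNReal.toReal_pos ht₀ ht_top) ht.le

end Ball

/-- reformulation of the main theorem as a refined restricted weak
type bound, with a supremum over all admissible balls `ℬ` with `|π(ℬ)| ≤ |E|`
and `|π*(ℬ)| ≤ |E*|`. -/
theorem stmt4 (d : ℕ) (hd : 2 ≤ d) :
    ∃ C δ : ℝ, 0 < C ∧ 0 < δ ∧
      ∀ (E Es : Set (Pt (d - 1))), MeasurableSet E → MeasurableSet Es →
        0 < volume E → volume E < ⊤ → 0 < volume Es → volume Es < ⊤ →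
        incT (d - 1) E Es ≤
          ENNReal.ofReal C * volume E ^ ((d : ℝ) / (d + 1)) *
            volume Es ^ ((d : ℝ) / (d + 1)) *
            ⨆ (zb : Pt (d - 1) × Pt (d - 1)) (e : Fin (d - 1) → Vec (d - 1))
              (r : Fin (d - 1) → ℝ) (rs : Fin (d - 1) → ℝ) (ρ : ℝ)
              (hball : IsBallParams (d - 1) zb e r rs ρ)
              (h1 : volume (Prod.fst '' ballI (d - 1) zb e r rs ρ) ≤ volume E)
              (h2 : volume (Prod.snd '' ballI (d - 1) zb e r rs ρ) ≤ volume Es),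
              ((volume (E ∩ Prod.fst '' ballI (d - 1) zb e r rs ρ) / volume E) *
                (volume (Es ∩ Prod.snd '' ballI (d - 1) zb e r rs ρ) / volume Es)) ^ δ := by
  obtain ⟨n, rfl⟩ : ∃ n, d = n + 1 := ⟨d - 1, by omega⟩
  have hn : 0 < n := by omega
  have hK := one_le_absorbConst hn
  have hm : 0 < 2 * densityExponent n := by simp only [densityExponent, localizationExponent]; omega
  refine ⟨absorbConst n ^ 2, 1 / (2 * densityExponent n : ℕ), by positivity, by positivity, ?_⟩
  intro E F hE hF hE₀ hE₁ hF₀ hF₁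
  have h := incidence_le_mul_ballDensity hn hE hF hE₀ hE₁ hF₀ hF₁
  rw [← incT_eq_incidence E hF] at h
  rwa [show ((n + 1 : ℕ) : ℝ) / ((n + 1 : ℕ) + 1) = (n + 1) / (n + 2) by push_cast; ring]
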